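/- arXiv:1706.04935 — 2 statements merged into one kernel-verified Lean document; each statement's English description precedes it below -/
import Mathlib

section
/- For every permutation w ∈ S_n, the Newton polytope of the Schubert polynomial 𝔖_w equals the Schubitope S_{D(w)} of the Rothe diagram D(w) of w. -/
open Finset MvPolynomial

/-- `DomLE R S`: `R` and `S` have the same cardinality and, for each `k`, the `k`-th least
element of `R` does not exceed the `k`-th least element of `S`.  The bases of the Schubert
matroid `SM_n(S)` are exactly the `B` with `DomLE B S`. -/
def DomLE {α : Type*} [LinearOrder α] (R S : Finset α) : Prop :=
  R.card = S.card ∧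
    ∀ (k : ℕ) (hR : k < (R.sort (· ≤ ·)).length) (hS : k < (S.sort (· ≤ ·)).length),
      (R.sort (· ≤ ·)).get ⟨k, hR⟩ ≤ (S.sort (· ≤ ·)).get ⟨k, hS⟩

/-- Auxiliary greedy matching count for a parenthesis word (`true` = '(', `false` = ')'),
given the current number of unmatched open parentheses. -/
def matchedPairsAux : List Bool → ℕ → ℕ
  | [], _ => 0
  | true :: rest, o => matchedPairsAux rest (o + 1)
  | false :: rest, 0 => matchedPairsAux rest 0
  | false :: rest, o + 1 => matchedPairsAux rest o + 1

/-- The number of paired `()`'s in a parenthesis word (`true` = '(', `false` = ')'). -/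
def matchedPairs (w : List Bool) : ℕ := matchedPairsAux w 0

/-- Column `j` of a diagram `D ⊆ [n]²`: the set `D_j = {i : (i,j) ∈ D}`. -/
def colSet {n : ℕ} (D : Finset (Fin n × Fin n)) (j : Fin n) : Finset (Fin n) :=
  Finset.univ.filter fun i => (i, j) ∈ D

/-- The parenthesis part of `word_{j,I}(D)`: reading rows `i` from top to bottom, record
'(' (= `true`) if `(i,j) ∉ D` and `i ∈ I`, and ')' (= `false`) if `(i,j) ∈ D` and `i ∉ I`.
(The `⋆`'s, at positions with `(i,j) ∈ D` and `i ∈ I`, play no role in the matching.) -/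
def colWord {n : ℕ} (D : Finset (Fin n × Fin n)) (j : Fin n) (I : Finset (Fin n)) :
    List Bool :=
  (List.finRange n).filterMap fun i =>
    if (i, j) ∈ D then (if i ∈ I then none else some false)
    else (if i ∈ I then some true else none)

/-- `θ_D^j(I)`: the number of paired `()`'s plus the number of `⋆`'s in `word_{j,I}(D)`. -/
def thetaCol {n : ℕ} (D : Finset (Fin n × Fin n)) (j : Fin n) (I : Finset (Fin n)) : ℕ :=
  matchedPairs (colWord D j I) + (colSet D j ∩ I).card

/-- `θ_D(I) = Σ_{j=1}^n θ_D^j(I)`. -/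
def theta {n : ℕ} (D : Finset (Fin n × Fin n)) (I : Finset (Fin n)) : ℕ :=
  ∑ j : Fin n, thetaCol D j I

/-- The Schubitope `S_D` of a diagram `D ⊆ [n]²`. -/
def schubitope {n : ℕ} (D : Finset (Fin n × Fin n)) : Set (Fin n → ℝ) :=
  {a | (∀ i, 0 ≤ a i) ∧ (∑ i, a i) = (D.card : ℝ) ∧
    ∀ I : Finset (Fin n), ∑ i ∈ I, a i ≤ (theta D I : ℝ)}

/-- The Newton polytope of a multivariate polynomial: the convex hull of the exponent
vectors of the monomials appearing with nonzero coefficient. -/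
def newtonPolytope {σ : Type*} (f : MvPolynomial σ ℤ) : Set (σ → ℝ) :=
  convexHull ℝ ((fun (d : σ →₀ ℕ) (i : σ) => ((d i : ℕ) : ℝ)) '' ↑f.support)

/-- The Rothe diagram `D(w) = {(i,j) : w(i) > j, w⁻¹(j) > i}` of a permutation `w ∈ S_n`. -/
def rothe {n : ℕ} (w : Equiv.Perm (Fin n)) : Finset (Fin n × Fin n) :=
  Finset.univ.filter fun p => p.2 < w p.1 ∧ p.1 < w⁻¹ p.2

/-!
Each `θ_D^j` is the rank function of a Schubert matroid, that is, a minimum of threshold bounds.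
By separation, a point of `S_D` lies in the convex hull of a set `A` of exponent vectors as soon as
for every chain of index sets some vector in `A` attains all the bounds `θ_D(I)` of that chain: the
relevant chain consists of the superlevel sets of the separating functional.

Monk's rule gives the transition formula `𝔖_w = x_r 𝔖_v + ∑_q 𝔖_{v (q r)}` for the last inversion
`(r, s)` of `w`, with `v = w (r s)`. By induction the coefficients are nonnegative, so that the
support of `𝔖_w` is the union of those of the summands. No summand exceeds the bounds of `D(w)`.
For every chain of index sets, moreover, one summand attains the bounds of `D(w)` along the whole
chain. If some member of the chain avoids `r` and loses rank when the box in row `r` is removed from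
the column of `w(s)`, then such a `q` is determined by the last row that minimises the threshold
bound of the remaining column for the smallest such member; otherwise `x_r 𝔖_v` will do.
-/

section Convexity

variable {ι : Type*} [Fintype ι]

-- For `l` below every `c i`, the sum `∑ i, (c i - l) * b i` is the integral over `t > l` of the
-- partial sums of `b` over the superlevel sets `{t ≤ c}`.
lemma sum_mul_nonneg_of_forall_superlevel {c b : ι → ℝ} (hb : ∑ i, b i = 0)
    (h : ∀ t, 0 ≤ ∑ i with t ≤ c i, b i) : 0 ≤ ∑ i, c i * b i := by
  obtain ⟨l, hl⟩ := (Set.finite_range c).bddBelow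
  obtain ⟨L, hL⟩ := (Set.finite_range c).bddAbove
  replace hl i : l ≤ c i := hl ⟨i, rfl⟩
  replace hL i : c i ≤ L := hL ⟨i, rfl⟩
  have hterm i : ∫ t in Set.Ioc l L, (Set.Iic (c i)).indicator (fun _ ↦ b i) t
      = (c i - l) * b i := by
    rw [MeasureTheory.setIntegral_indicator measurableSet_Iic, Set.Ioc_inter_Iic,
      min_eq_right (hL i), MeasureTheory.setIntegral_const, Real.volume_real_Ioc_of_le (hl i),
      smul_eq_mul]
  have hint i : MeasureTheory.IntegrableOn ((Set.Iic (c i)).indicator fun _ ↦ b i)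
      (Set.Ioc l L) :=
    (MeasureTheory.integrableOn_const measure_Ioc_lt_top.ne).indicator measurableSet_Iic
  calc 0 ≤ ∫ t in Set.Ioc l L, ∑ i, (Set.Iic (c i)).indicator (fun _ ↦ b i) t :=
        MeasureTheory.integral_nonneg fun t ↦ by
          simpa only [Pi.zero_apply, Set.indicator_apply, Set.mem_Iic, sum_filter] using h t
    _ = ∑ i, (c i - l) * b i := by
        rw [MeasureTheory.integral_finsetSum _ fun i _ ↦ hint i]
        simp only [hterm]
    _ = ∑ i, c i * b i := by
        simp only [sub_mul, sum_sub_distrib, ← mul_sum, hb, mul_zero, sub_zero]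

-- The chain to use is that of the superlevel sets of a separating functional.
lemma mem_convexHull_of_forall_isChain {A : Set (ι → ℝ)} (hA : A.Finite) {a : ι → ℝ}
    (h : ∀ 𝒥 : Set (Finset ι), IsChain (· ⊆ ·) 𝒥 →
      ∃ d ∈ A, ∑ i, d i = ∑ i, a i ∧ ∀ I ∈ 𝒥, ∑ i ∈ I, a i ≤ ∑ i ∈ I, d i) :
    a ∈ convexHull ℝ A := by
  classical
  by_contra ha
  obtain ⟨f, u, hfu, hua⟩ := geometric_hahn_banach_closed_point (convex_convexHull ℝ A)
    (hA.isClosed_convexHull ℝ) ha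
  let c i : ℝ := f (Pi.single i 1)
  have hf x : f x = ∑ i, c i * x i := by
    conv_lhs => rw [pi_eq_sum_univ' x]
    simp only [map_sum, map_smul, smul_eq_mul, c, mul_comm]
  let superlevel (t : ℝ) : Finset ι := {i | t ≤ c i}
  have hchain : IsChain (· ⊆ ·) (Set.range superlevel) := by
    have hanti : Antitone superlevel := fun s t hst ↦
      monotone_filter_right _ fun i _ hi ↦ hst.trans hi
    exact hanti.isChain_range
  obtain ⟨d, hdA, hd, hI⟩ := h _ hchain
  have hle : 0 ≤ ∑ i, c i * (d i - a i) :=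
    sum_mul_nonneg_of_forall_superlevel (by rw [sum_sub_distrib, hd, sub_self]) fun t ↦ by
      rw [sum_sub_distrib, sub_nonneg]
      exact hI _ ⟨t, rfl⟩
  have hlt : f d < f a := (hfu d (subset_convexHull ℝ A hdA)).trans hua
  simp only [mul_sub, sum_sub_distrib, ← hf] at hle
  linarith

end Convexity

section Polynomials

variable {σ ι R : Type*}

lemma sum_single_add [DecidableEq ι] {M : Type*} [AddCommMonoid M] (i : ι) (m : M) (d : ι →₀ M)
    (I : Finset ι) :
    ∑ j ∈ I, (Finsupp.single i m + d : ι →₀ M) j = ∑ j ∈ I, d j + if i ∈ I then m else 0 := by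
  simp [sum_add_distrib, Finsupp.single_apply, add_comm]

lemma X_sub_X_ne_zero [CommRing R] [Nontrivial R] {i j : σ} (hij : i ≠ j) :
    (X i - X j : MvPolynomial σ R) ≠ 0 :=
  sub_ne_zero.2 (X_injective.ne hij)

variable [CommSemiring R] [PartialOrder R]

lemma coeff_X_mul_nonneg {f : MvPolynomial σ R} (hf : ∀ d, 0 ≤ f.coeff d) (i : σ) (d : σ →₀ ℕ) :
    0 ≤ (X i * f).coeff d := by
  classical
  rw [coeff_X_mul']
  split_ifs
  exacts [hf _, le_rfl]

variable [IsOrderedAddMonoid R] {d : σ →₀ ℕ}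

lemma mem_support_add_of_coeff_nonneg {f g : MvPolynomial σ R} (hf : 0 ≤ f.coeff d)
    (hg : 0 ≤ g.coeff d) : d ∈ (f + g).support ↔ d ∈ f.support ∨ d ∈ g.support := by
  simp only [mem_support_iff, coeff_add, ne_eq, add_eq_zero_iff_of_nonneg hf hg, not_and_or]

lemma mem_support_sum_of_coeff_nonneg {s : Finset ι} {f : ι → MvPolynomial σ R}
    (hf : ∀ i ∈ s, 0 ≤ (f i).coeff d) :
    d ∈ (∑ i ∈ s, f i).support ↔ ∃ i ∈ s, d ∈ (f i).support := by
  simp only [mem_support_iff, coeff_sum, ne_eq, sum_eq_zero_iff_of_nonneg hf, not_forall,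
    exists_prop]

end Polynomials

section SchubertRank

variable {n : ℕ} {A C D S T I J : Finset (Fin n)} {q r t : Fin n} {a b : ℕ}

/-- `|I ∩ [0, t)| + |S ∩ [t, ∞)|`, the bound that a threshold row `t` puts on the number of
elements of `S` that can be matched injectively with smaller or equal elements of `I`. The
threshold is a natural number, so that it may lie beyond the last row. -/
def cut (S I : Finset (Fin n)) (t : ℕ) : ℕ := #{i ∈ I | i.val < t} + #{i ∈ S | t ≤ i.val}

/-- The rank of `I` in the Schubert matroid of `S`, given by König's theorem as the least
of all threshold bounds. -/
noncomputable def schubertRank (S I : Finset (Fin n)) : ℕ := ⨅ t, cut S I t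

lemma schubertRank_le_cut (S I : Finset (Fin n)) (t : ℕ) : schubertRank S I ≤ cut S I t :=
  ciInf_le' _ t

lemma exists_cut_eq_schubertRank (S I : Finset (Fin n)) : ∃ t, cut S I t = schubertRank S I :=
  ciInf_mem _

lemma cut_eq_sum (S I : Finset (Fin n)) (t : ℕ) :
    cut S I t = ∑ i : Fin n, if (if i.val < t then i ∈ I else i ∈ S) then 1 else 0 := by
  rw [cut, ← filter_univ_mem I, ← filter_univ_mem S]
  simp only [filter_filter, mem_filter_univ, card_filter, ← sum_add_distrib]
  refine sum_congr rfl fun i _ ↦ ?_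
  grind

lemma cut_congr (h : ∀ i : Fin n, a ≤ i → (i ∈ S ↔ i ∈ T)) : cut S I a = cut T I a := by
  simp only [cut_eq_sum]
  refine sum_congr rfl fun i _ ↦ ?_
  grind

lemma cut_le_cut_of_subset (h : S ⊆ T) (I : Finset (Fin n)) (a : ℕ) :
    cut S I a ≤ cut T I a := by
  simp only [cut_eq_sum]
  refine sum_le_sum fun i _ ↦ ?_
  grind

lemma cut_insert (hq : q ∉ S) (I : Finset (Fin n)) (a : ℕ) :
    cut (insert q S) I a = cut S I a + if a ≤ q then 1 else 0 := by
  rw [← Fintype.sum_ite_eq' q fun i ↦ if a ≤ i then 1 else 0]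
  simp only [cut_eq_sum, ← sum_add_distrib]
  refine sum_congr rfl fun i _ ↦ ?_
  grind

lemma cut_union_of_forall_le (hST : Disjoint S T) (hT : ∀ i ∈ T, a ≤ i) (I : Finset (Fin n)) :
    cut (S ∪ T) I a = cut S I a + #T := by
  rw [← filter_univ_mem T, card_filter, filter_univ_mem]
  simp only [cut_eq_sum, ← sum_add_distrib]
  refine sum_congr rfl fun i _ ↦ ?_
  have := disjoint_left.1 hST
  grind

lemma cut_union_le (S T I : Finset (Fin n)) (a : ℕ) : cut (S ∪ T) I a ≤ cut S I a + #T := by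
  rw [← filter_univ_mem T, card_filter, filter_univ_mem]
  simp only [cut_eq_sum, ← sum_add_distrib]
  refine sum_le_sum fun i _ ↦ ?_
  grind

lemma cut_submodular (S : Finset (Fin n)) (hIJ : I ⊆ J) (hab : a ≤ b) :
    cut S I b + cut S J a ≤ cut S J b + cut S I a := by
  simp only [cut_eq_sum, ← sum_add_distrib]
  refine sum_le_sum fun i _ ↦ ?_
  grind

lemma cut_succ_add (S I : Finset (Fin n)) (r : Fin n) :
    cut S I (r + 1) + (if r ∈ S then 1 else 0) = cut S I r + if r ∈ I then 1 else 0 := by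
  rw [← Fintype.sum_ite_eq' r fun i ↦ if i ∈ S then 1 else 0,
    ← Fintype.sum_ite_eq' r fun i ↦ if i ∈ I then 1 else 0]
  simp only [cut_eq_sum, ← sum_add_distrib]
  refine sum_congr rfl fun i _ ↦ ?_
  rcases lt_trichotomy i r with h | rfl | h <;> grind

lemma cut_mono_of_forall_lt (hS : ∀ i ∈ S, i.val < a) (hab : a ≤ b) :
    cut S I a ≤ cut S I b := by
  simp only [cut_eq_sum]
  refine sum_le_sum fun i _ ↦ ?_
  grind

lemma cut_self (S : Finset (Fin n)) (a : ℕ) : cut S S a = #S := by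
  simp [cut_eq_sum]

lemma schubertRank_mono (h : S ⊆ T) (I : Finset (Fin n)) : schubertRank S I ≤ schubertRank T I :=
  ciInf_mono (OrderBot.bddBelow _) fun a ↦ cut_le_cut_of_subset h I a

lemma schubertRank_univ (S : Finset (Fin n)) : schubertRank S univ = #S := by
  have hzero : cut S univ 0 = #S := by simp [cut]
  refine le_antisymm (hzero ▸ schubertRank_le_cut S univ 0) (le_ciInf fun a ↦ ?_)
  have := cut_submodular S (subset_univ S) (Nat.zero_le a)
  rw [cut_self, cut_self, hzero] at this
  lia

lemma schubertRank_empty (I : Finset (Fin n)) : schubertRank ∅ I = 0 :=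
  Nat.eq_zero_of_le_zero <| (schubertRank_le_cut ∅ I 0).trans_eq (by simp [cut])

lemma schubertRank_add_le_insert (hS : ∀ i ∈ S, i < r) (I : Finset (Fin n)) :
    schubertRank S I + (if r ∈ I then 1 else 0) ≤ schubertRank (insert r S) I := by
  have hrS : r ∉ S := fun h ↦ (hS r h).false
  refine le_ciInf fun a ↦ ?_
  rw [cut_insert hrS]
  obtain har | hra := le_or_gt a r
  · have := schubertRank_le_cut S I a
    grind
  · have hsucc := cut_succ_add S I r
    have hmono : cut S I (r + 1) ≤ cut S I a :=
      cut_mono_of_forall_lt (fun i hi ↦ Nat.lt_succ_of_lt (hS i hi)) hra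
    have := schubertRank_le_cut S I r
    grind

lemma schubertRank_add_eq_insert (hS : ∀ i ∈ S, i < r)
    (hI : r ∉ I → schubertRank S I = cut S I r) :
    schubertRank S I + (if r ∈ I then 1 else 0) = schubertRank (insert r S) I := by
  have hrS : r ∉ S := fun h ↦ (hS r h).false
  refine (schubertRank_add_le_insert hS I).antisymm ?_
  by_cases hrI : r ∈ I
  · obtain ⟨a, ha⟩ := exists_cut_eq_schubertRank S I
    have := schubertRank_le_cut (insert r S) I a
    have := cut_insert hrS I a
    grind
  · have := schubertRank_le_cut (insert r S) I (r + 1)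
    have := cut_insert hrS I (r + 1)
    have := cut_succ_add S I r
    grind

lemma schubertRank_insert_le_insert (hqr : q < r) (hq : q ∉ S) (hr : r ∉ S)
    (I : Finset (Fin n)) : schubertRank (insert q S) I ≤ schubertRank (insert r S) I := by
  refine ciInf_mono (OrderBot.bddBelow _) fun a ↦ ?_
  rw [cut_insert hq, cut_insert hr]
  grind

lemma schubertRank_union_le_add (S T I : Finset (Fin n)) :
    schubertRank (S ∪ T) I ≤ schubertRank S I + #T := by
  obtain ⟨a, ha⟩ := exists_cut_eq_schubertRank S I
  exact ha ▸ (schubertRank_le_cut _ I a).trans (cut_union_le S T I a)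

lemma schubertRank_union_le_cut (hS : ∀ i ∈ S, i < q) (hqa : q ≤ a) (T I : Finset (Fin n)) :
    schubertRank (S ∪ T) I ≤ cut T I a := by
  refine (schubertRank_le_cut _ I a).trans_eq (cut_congr fun i hi ↦ ?_)
  grind

lemma schubertRank_union_eq_or (hS : ∀ i ∈ S, i < q) (hT : ∀ i ∈ T, q ≤ i)
    (I : Finset (Fin n)) :
    schubertRank (S ∪ T) I = schubertRank S I + #T ∨
      ∃ a : ℕ, q < a ∧ schubertRank (S ∪ T) I = cut T I a := by
  have hST : Disjoint S T := disjoint_left.2 fun i hi hi' ↦ ((hS i hi).trans_le (hT i hi')).false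
  obtain ⟨a, ha⟩ := exists_cut_eq_schubertRank (S ∪ T) I
  obtain haq | hqa := le_or_gt a q
  · left
    have := schubertRank_union_le_add S T I
    rw [cut_union_of_forall_le hST fun i hi ↦ haq.trans (hT i hi)] at ha
    have := schubertRank_le_cut S I a
    lia
  · refine .inr ⟨a, hqa, ha ▸ cut_congr fun i hi ↦ ?_⟩
    grind

lemma schubertRank_union_add_le (hAS : A ⊆ S) (hS : ∀ i ∈ S, i < q) (hT : ∀ i ∈ T, q ≤ i)
    (I : Finset (Fin n)) :
    schubertRank (S ∪ T) I + schubertRank A I ≤ schubertRank S I + schubertRank (A ∪ T) I := by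
  obtain h | ⟨a, hqa, h⟩ := schubertRank_union_eq_or (fun i hi ↦ hS i (hAS hi)) hT I
  · have := schubertRank_union_le_add S T I
    lia
  · have := schubertRank_union_le_cut hS hqa.le T I
    have := schubertRank_mono hAS I
    lia

/-- Either every threshold after `t` gives a strictly larger bound than `t`, or `r ∉ I`, the
threshold `r` gives the rank of `I`, and no threshold before `t` gives a smaller bound than `t`.
Under both conditions, an element `r` of a column agreeing with `S` from row `t` on can be moved up
to a row `q ≥ t` without changing the rank of `I`. -/
def IsCriticalRow (S I : Finset (Fin n)) (t r : Fin n) : Prop :=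
  (r ∉ I ∧ schubertRank S I = cut S I r ∧ ∀ a : ℕ, a ≤ t → cut S I t ≤ cut S I a) ∨
    ∀ a : ℕ, t < a → cut S I t < cut S I a

lemma IsCriticalRow.schubertRank_insert_eq_insert (h : IsCriticalRow S I t r) (htq : t ≤ q)
    (hqr : q < r) (hD : ∀ i ∈ D, i < r) (hq : q ∉ D) (hDS : ∀ i, t ≤ i → (i ∈ D ↔ i ∈ S)) :
    schubertRank (insert q D) I = schubertRank (insert r D) I := by
  have hr : r ∉ D := fun h ↦ (hD r h).false
  have hcut {a : ℕ} (ha : t ≤ a) : cut D I a = cut S I a := cut_congr fun i hi ↦ hDS i (ha.trans hi)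
  refine (schubertRank_insert_le_insert hqr hq hr I).antisymm (le_ciInf fun a ↦ ?_)
  obtain haq | hqa := le_or_gt a q
  · have := schubertRank_le_cut (insert r D) I a
    have := cut_insert hq I a
    have := cut_insert hr I a
    grind
  rw [cut_insert hq, if_neg hqa.not_ge, add_zero, hcut (by grind)]
  obtain ⟨hrI, hrank, -⟩ | hlt := h
  · have hle := schubertRank_le_cut (insert r D) I (r + 1)
    have := cut_insert hr I (r + 1)
    have := cut_succ_add D I r
    have := hcut (a := r) (by grind)
    have := schubertRank_le_cut S I a
    grind
  · have := schubertRank_le_cut (insert r D) I t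
    have := cut_insert hr I t
    have := hcut (a := t) le_rfl
    have := hlt a (by grind)
    grind

lemma IsCriticalRow.schubertRank_union_add_eq (h : IsCriticalRow C I t r) (htq : t ≤ q)
    (hq : q ∉ C) (hAT : A ∪ T = insert q C) (hAS : A ⊆ S) (hS : ∀ i ∈ S, i < q)
    (hT : ∀ i ∈ T, q ≤ i) (hSA : ∀ i, t ≤ i → (i ∈ S ↔ i ∈ A)) :
    schubertRank (S ∪ T) I + schubertRank A I = schubertRank S I + schubertRank (A ∪ T) I := by
  have hA : ∀ i ∈ A, i < q := fun i hi ↦ hS i (hAS hi)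
  have hdisj : Disjoint A T := disjoint_left.2 fun i hi hi' ↦ ((hA i hi).trans_le (hT i hi')).false
  have hcut {a : ℕ} (ha : t ≤ a) : cut S I a = cut A I a := cut_congr fun i hi ↦ hSA i (ha.trans hi)
  have hcutA {a : ℕ} (ha : a ≤ t) : cut A I a + #T = cut C I a + 1 := by
    rw [← cut_union_of_forall_le hdisj fun i hi ↦ ha.trans (htq.trans (hT i hi)), hAT,
      cut_insert hq, if_pos (ha.trans htq)]
  refine (schubertRank_union_add_le hAS hS hT I).antisymm ?_
  obtain ⟨-, -, hmin⟩ | hlt := h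
  · have hle : schubertRank S I ≤ schubertRank A I := le_ciInf fun a ↦ by
      obtain hta | hat := le_total t.val a
      · exact hcut hta ▸ schubertRank_le_cut S I a
      · have := schubertRank_le_cut S I t
        have := hcut (a := t) le_rfl
        have := hcutA hat
        have := hcutA (a := t) le_rfl
        have := hmin a hat
        lia
    have := schubertRank_mono (union_subset_union_left hAS) I (S := A ∪ T)
    lia
  · have hle : schubertRank S I + #T ≤ schubertRank (S ∪ T) I := by
      obtain h | ⟨a, hqa, h⟩ := schubertRank_union_eq_or hS hT I
      · exact h.ge
      · have hTC : cut T I a = cut C I a := cut_congr fun i hi ↦ by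
          have := Finset.ext_iff.1 hAT i
          grind
        have := schubertRank_le_cut S I t
        have := hcut (a := t) le_rfl
        have := hcutA (a := t) le_rfl
        have := hlt a (by grind)
        lia
    have := schubertRank_union_le_add A T I
    lia

lemma isCriticalRow_univ (hq : q ∉ S) (r : Fin n) : IsCriticalRow S univ q r := by
  refine .inr fun a ha ↦ ?_
  have := cut_submodular S (subset_univ (insert q S)) ha.le
  have := cut_self (insert q S) a
  have := cut_self (insert q S) q
  have := cut_insert hq (insert q S) a
  have := cut_insert hq (insert q S) q
  grind

lemma exists_isLastMinRow (hS : ∀ i ∈ S, i < r) (hI : schubertRank S I < cut S I r) :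
    ∃ t < r, t ∉ S ∧ cut S I t = schubertRank S I ∧ ∀ a : ℕ, t < a → cut S I t < cut S I a := by
  have hlt {a : ℕ} (ha : cut S I a = schubertRank S I) : a < r := by
    by_contra! hra
    have := cut_mono_of_forall_lt (I := I) hS hra
    lia
  obtain ⟨a, ha, hmax⟩ := Set.Finite.exists_maximal
    ((Set.finite_Iio r.val).subset fun a (ha : cut S I a = schubertRank S I) ↦ hlt ha)
    (exists_cut_eq_schubertRank S I)
  have hlast {b : ℕ} (hab : a < b) : cut S I a < cut S I b := by
    refine lt_of_le_of_ne (ha ▸ schubertRank_le_cut S I b) fun hb ↦ ?_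
    exact hab.not_ge (hmax (hb.symm.trans ha) hab.le)
  refine ⟨⟨a, (hlt ha).trans r.isLt⟩, hlt ha, fun haS ↦ ?_, ha, fun b ↦ hlast⟩
  have := cut_succ_add S I ⟨a, (hlt ha).trans r.isLt⟩
  have := hlast a.lt_succ_self
  grind

-- Take a minimal member of the chain violating the first alternative, and its last minimising
-- row: by submodularity the row stays critical for the larger members, and the smaller members
-- are not violators.
lemma exists_isCriticalRow {𝒥 : Set (Finset (Fin n))} (h𝒥 : IsChain (· ⊆ ·) 𝒥)
    (hS : ∀ i ∈ S, i < r) :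
    (∀ I ∈ 𝒥, r ∉ I → schubertRank S I = cut S I r) ∨
      ∃ t < r, t ∉ S ∧ ∀ I ∈ 𝒥, IsCriticalRow S I t r := by
  refine or_iff_not_imp_left.2 fun h ↦ ?_
  push Not at h
  obtain ⟨I, ⟨hI, hrI, hne⟩, hmin⟩ := Set.Finite.exists_minimal
    (Set.toFinite {I | I ∈ 𝒥 ∧ r ∉ I ∧ schubertRank S I ≠ cut S I r}) h
  obtain ⟨t, htr, htS, ht, hlast⟩ :=
    exists_isLastMinRow hS ((schubertRank_le_cut S I r).lt_of_ne hne)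
  refine ⟨t, htr, htS, fun J hJ ↦ ?_⟩
  by_cases hIJ : I ⊆ J
  · refine .inr fun a ha ↦ ?_
    have := cut_submodular S hIJ ha.le
    have := hlast a ha
    lia
  · have hJI : J ⊆ I := (h𝒥.total hJ hI).resolve_right hIJ
    have hrJ : r ∉ J := fun h ↦ hrI (hJI h)
    refine .inl ⟨hrJ, by_contra fun hne ↦ hIJ (hmin ⟨hJ, hrJ, hne⟩ hJI), fun a ha ↦ ?_⟩
    have := cut_submodular S hJI ha
    have := schubertRank_le_cut S I a
    lia

end SchubertRank

section Theta

variable {n : ℕ}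

/-- The parenthesis word of a column with boxes at the rows satisfying `d`, for the index set
given by `e`; `colWord D j I` is the instance for column `j` of `D`. -/
def parenWord (d e : Fin n → Bool) : List Bool :=
  (List.finRange n).filterMap fun i ↦
    if d i then (if e i then none else some false) else (if e i then some true else none)

lemma parenWord_succ (d e : Fin (n + 1) → Bool) :
    parenWord d e = (if d 0 then (if e 0 then [] else [false]) else (if e 0 then [true] else [])) ++
      parenWord (d ∘ Fin.succ) (e ∘ Fin.succ) := by
  cases hd : d 0 <;> cases he : e 0 <;>
    simp [parenWord, List.finRange_succ, List.filterMap_map, hd, he]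

lemma matchedPairsAux_parenWord_add_le (d e : Fin n → Bool) (o : ℕ) :
    matchedPairsAux (parenWord d e) o + ∑ i, (d i && e i).toNat ≤ ∑ i, (d i).toNat := by
  induction n generalizing o with
  | zero => simp [parenWord, matchedPairsAux]
  | succ n ih =>
    have := ih (d ∘ Fin.succ) (e ∘ Fin.succ)
    rw [parenWord_succ, Fin.sum_univ_succ, Fin.sum_univ_succ]
    cases hd : d 0 <;> cases he : e 0 <;> cases o <;> grind [matchedPairsAux]

lemma matchedPairsAux_parenWord_add_le_cut (d e : Fin n → Bool) (o t : ℕ) :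
    matchedPairsAux (parenWord d e) o + ∑ i, (d i && e i).toNat ≤
      o + ∑ i, (if i.val < t then e i else d i).toNat := by
  induction n generalizing o t with
  | zero => simp [parenWord, matchedPairsAux]
  | succ n ih =>
    rcases t with _ | t
    · simpa using (matchedPairsAux_parenWord_add_le d e o).trans (Nat.le_add_left _ o)
    have h o := ih (d ∘ Fin.succ) (e ∘ Fin.succ) o t
    rw [parenWord_succ, Fin.sum_univ_succ, Fin.sum_univ_succ]
    simp only [Fin.val_succ, Fin.val_zero, Nat.succ_pos, if_true, Nat.succ_lt_succ_iff]
    cases hd : d 0 <;> cases he : e 0 <;> cases o <;> grind [matchedPairsAux]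

lemma matchedPairsAux_parenWord_add_eq_or (d e : Fin n → Bool) (o : ℕ) :
    matchedPairsAux (parenWord d e) o + ∑ i, (d i && e i).toNat = ∑ i, (d i).toNat ∨
      ∃ t : ℕ, matchedPairsAux (parenWord d e) o + ∑ i, (d i && e i).toNat =
        o + ∑ i, (if i.val < t then e i else d i).toNat := by
  induction n generalizing o with
  | zero => simp [parenWord, matchedPairsAux]
  | succ n ih =>
    let c (t : ℕ) : ℕ := ∑ i : Fin n, (if i.val < t then e i.succ else d i.succ).toNat
    have hzero : c 0 = ∑ i : Fin n, (d i.succ).toNat := by simp [c]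
    have hsucc t : ∑ i : Fin (n + 1), (if i.val < t + 1 then e i else d i).toNat =
        (e 0).toNat + c t := by simp [Fin.sum_univ_succ, c]
    have h (o : ℕ) : _ ∨ ∃ t, _ = o + c t := ih (d ∘ Fin.succ) (e ∘ Fin.succ) o
    by_contra! hne
    have hne₁ t := hsucc t ▸ hne.2 (t + 1)
    replace hne := hne.1
    rw [parenWord_succ, Fin.sum_univ_succ] at hne hne₁
    rw [Fin.sum_univ_succ] at hne
    clear_value c
    cases hd : d 0 <;> cases he : e 0 <;> cases o <;> grind [matchedPairsAux]

lemma thetaCol_eq_schubertRank (D : Finset (Fin n × Fin n)) (j : Fin n) (I : Finset (Fin n)) :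
    thetaCol D j I = schubertRank (colSet D j) I := by
  let d (i : Fin n) : Bool := (i, j) ∈ D
  let e (i : Fin n) : Bool := i ∈ I
  have hword : colWord D j I = parenWord d e := by simp [colWord, parenWord, d, e]
  have hstar : #(colSet D j ∩ I) = ∑ i, (d i && e i).toNat := by
    rw [colSet, filter_inter, univ_inter, ← filter_univ_mem I, filter_filter, card_filter]
    refine sum_congr rfl fun i _ ↦ ?_
    simp only [d, e]
    grind
  have hcut t : cut (colSet D j) I t = ∑ i, (if i.val < t then e i else d i).toNat := by
    rw [cut_eq_sum]
    refine sum_congr rfl fun i _ ↦ ?_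
    simp only [colSet, mem_filter_univ, d, e]
    grind
  rw [thetaCol, matchedPairs, hword, hstar]
  refine le_antisymm (le_ciInf fun t ↦ ?_) ?_
  · simpa [hcut] using matchedPairsAux_parenWord_add_le_cut d e 0 t
  · obtain h | ⟨t, h⟩ := matchedPairsAux_parenWord_add_eq_or d e 0
    · simpa [h, hcut] using schubertRank_le_cut (colSet D j) I 0
    · simpa [h, hcut] using schubertRank_le_cut (colSet D j) I t

lemma card_eq_sum_card_colSet (D : Finset (Fin n × Fin n)) : #D = ∑ j, #(colSet D j) := by
  simp only [colSet, card_filter]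
  rw [sum_comm, ← Fintype.sum_prod_type', ← card_filter, filter_univ_mem]

lemma theta_univ (D : Finset (Fin n × Fin n)) : theta D univ = #D := by
  simp only [theta, thetaCol_eq_schubertRank, schubertRank_univ, card_eq_sum_card_colSet]

lemma convex_schubitope (D : Finset (Fin n × Fin n)) : Convex ℝ (schubitope D) := by
  have hlin (I : Finset (Fin n)) : IsLinearMap ℝ fun a : Fin n → ℝ ↦ ∑ i ∈ I, a i :=
    ⟨fun _ _ ↦ sum_add_distrib, fun _ _ ↦ (mul_sum ..).symm⟩
  simp only [schubitope, Set.ofPred_and, Set.ofPred_forall]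
  exact (convex_iInter fun i ↦ convex_halfSpace_ge (LinearMap.proj i).isLinear 0).inter
    ((convex_hyperplane (hlin univ) _).inter (convex_iInter fun I ↦ convex_halfSpace_le (hlin I) _))

/-- The exponent vectors in `A` satisfy the inequalities defining `S_D`, and for each chain of
index sets some vector in `A` makes all the inequalities of the chain equalities. This is a
combinatorial certificate for `S_D` being the convex hull of `A`. -/
structure SpansSchubitope (D : Finset (Fin n × Fin n)) (A : Set (Fin n →₀ ℕ)) : Prop where
  sum_univ_eq : ∀ d ∈ A, ∑ i, d i = theta D univ
  sum_le : ∀ d ∈ A, ∀ I, ∑ i ∈ I, d i ≤ theta D I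
  exists_tight : ∀ 𝒥 : Set (Finset (Fin n)), IsChain (· ⊆ ·) 𝒥 →
    ∃ d ∈ A, ∀ I ∈ 𝒥, ∑ i ∈ I, d i = theta D I

lemma SpansSchubitope.newtonPolytope_eq {D : Finset (Fin n × Fin n)}
    {f : MvPolynomial (Fin n) ℤ} (h : SpansSchubitope D f.support) :
    newtonPolytope f = schubitope D := by
  have hcast {d : Fin n →₀ ℕ} {I : Finset (Fin n)} {m : ℕ} (hd : ∑ i ∈ I, d i = m) :
      ∑ i ∈ I, (d i : ℝ) = m := mod_cast hd
  refine (convexHull_min ?_ (convex_schubitope D)).antisymm fun a ⟨_, ha, hle⟩ ↦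
    mem_convexHull_of_forall_isChain (f.support.finite_toSet.image _) fun 𝒥 h𝒥 ↦ ?_
  · rintro _ ⟨d, hd, rfl⟩
    exact ⟨fun i ↦ Nat.cast_nonneg _, hcast (theta_univ D ▸ h.sum_univ_eq d hd),
      fun I ↦ by beta_reduce; exact mod_cast h.sum_le d hd I⟩
  · obtain ⟨d, hd, htight⟩ := h.exists_tight 𝒥 h𝒥
    exact ⟨_, ⟨d, hd, rfl⟩, (hcast (theta_univ D ▸ h.sum_univ_eq d hd)).trans ha.symm,
      fun I hI ↦ (hle I).trans_eq (hcast (htight I hI)).symm⟩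

end Theta

section SchubertPolynomials

open Equiv

variable {n : ℕ} {R : Type*} {v w : Perm (Fin n)} {i j a b r s : Fin n}

/-- `v` is covered by `v * swap a b` in the Bruhat order, where `a < b`. -/
def IsBruhatCover (v : Perm (Fin n)) (a b : Fin n) : Prop :=
  a < b ∧ v a < v b ∧ ∀ c, a < c → c < b → v c < v a ∨ v b < v c

instance (v : Perm (Fin n)) (a b : Fin n) : Decidable (IsBruhatCover v a b) :=
  inferInstanceAs (Decidable (_ ∧ _))

lemma swap_lt_swap_iff (hij : i.val + 1 = j) (hne : ¬(a = i ∧ b = j)) (hne' : ¬(a = j ∧ b = i)) :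
    swap i j a < swap i j b ↔ a < b := by
  simp only [swap_apply_def]
  grind

lemma isBruhatCover_iff_mul_swap (hij : i.val + 1 = j) (hv : v i < v j) (hne : ¬(a = i ∧ b = j))
    (hne' : ¬(a = j ∧ b = i)) :
    IsBruhatCover v a b ↔ IsBruhatCover (v * swap i j) (swap i j a) (swap i j b) ∧
      (v * swap a b) i < (v * swap a b) j := by
  have hinj x y : v x = v y ↔ x = y := v.injective.eq_iff
  rw [IsBruhatCover, IsBruhatCover, swap_lt_swap_iff hij hne hne', (swap i j).surjective.forall]
  simp only [Perm.mul_apply, swap_apply_self]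
  constructor
  · rintro ⟨hab, hvab, h⟩
    refine ⟨⟨hab, hvab, fun c ↦ ?_⟩, ?_⟩
    · have := h c
      simp only [swap_apply_def]
      grind
    · have := h i
      have := h j
      simp only [swap_apply_def]
      grind
  · rintro ⟨⟨hab, hvab, h⟩, hlt⟩
    refine ⟨hab, hvab, fun c ↦ ?_⟩
    have := h c
    simp only [swap_apply_def] at this hlt
    grind

lemma wellFounded_toLex_gt :
    WellFounded fun w v : Perm (Fin n) ↦ toLex (v : Fin n → Fin n) < toLex (w : Fin n → Fin n) :=
  InvImage.wf (fun w : Perm (Fin n) ↦ toLex (w : Fin n → Fin n)) wellFounded_gt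

lemma ascent_induction {P : Perm (Fin n) → Prop}
    (h : ∀ w, (∀ i j, i.val + 1 = j.val → w i < w j → P (w * swap i j)) → P w) (w : Perm (Fin n)) :
    P w := by
  refine wellFounded_toLex_gt.induction w fun w ih ↦ h w fun i j hij hw ↦
    ih _ ⟨i, fun k hk ↦ ?_, ?_⟩
  · change k < i at hk
    change w k = w (swap i j k)
    rw [swap_apply_of_ne_of_ne] <;> grind
  · simpa using hw

lemma strictAntiOn_of_forall_not_lt {s : Set (Fin n)} (hs : s.OrdConnected)
    (h : ∀ i ∈ s, ∀ j ∈ s, i.val + 1 = j.val → ¬w i < w j) : StrictAntiOn w s := by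
  refine strictAntiOn_of_succ_lt hs fun i hi his hjs ↦ ?_
  have hij := Order.covBy_succ_of_not_isMax hi
  have hsucc : i.val + 1 = (Order.succ i).val := Order.covBy_iff_add_one_eq.1 (Fin.covBy_iff.1 hij)
  exact (not_lt.1 (h _ his _ hjs hsucc)).lt_of_ne (w.injective.ne hij.lt.ne')

lemma eq_revPerm_of_forall_not_lt (h : ∀ i j, i.val + 1 = j.val → ¬w i < w j) :
    w = Fin.revPerm := by
  have hanti : StrictAnti w :=
    strictAntiOn_univ.1 (strictAntiOn_of_forall_not_lt Set.ordConnected_univ fun i _ j _ ↦ h i j)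
  have hrev : (fun i ↦ (w i).rev) = id := StrictMono.eq_id fun a b hab ↦ by simp [hanti hab]
  ext i : 1
  rw [Fin.revPerm_apply, ← Fin.rev_eq_iff]
  exact congrFun hrev i

/-- `w` is dominant, that is, it avoids the pattern 132. -/
def IsDominant (w : Perm (Fin n)) : Prop :=
  ∀ a b c, a < b → b < c → w a < w c → ¬w c < w b

/-- The Lehmer code of `w`: the number of inversions of `w` whose left position is `a`. -/
def lehmerCode (w : Perm (Fin n)) (a : Fin n) : ℕ :=
  #{b | a < b ∧ w b < w a}

lemma lehmerCode_mul_swap (hij : i.val + 1 = j) (hw : w i < w j) (a : Fin n) :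
    lehmerCode (w * swap i j) a = lehmerCode w (swap i j a) + if a = i then 1 else 0 := by
  have hcorr : (if a = i then 1 else 0) = ∑ b, if b = i ∧ a = i then 1 else 0 := by
    split_ifs with ha <;> simp [ha]
  rw [lehmerCode, lehmerCode, card_filter, card_filter, ← Equiv.sum_comp (swap i j), hcorr,
    ← sum_add_distrib]
  refine sum_congr rfl fun b _ ↦ ?_
  simp only [Perm.mul_apply, swap_apply_self]
  grind

namespace IsDominant

lemma lehmerCode_eq (hd : IsDominant w) (hij : i.val + 1 = j) (hw : w i < w j) :
    lehmerCode w i = lehmerCode w j := by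
  refine congrArg card (filter_congr fun b _ ↦ ?_)
  have := hd i j b
  have : w b = w i ↔ b = i := w.injective.eq_iff
  grind

lemma mul_swap (hd : IsDominant w) (hij : i.val + 1 = j) (hw : w i < w j)
    (hi : ∀ a < i, w i < w a) : IsDominant (w * swap i j) := by
  intro a b c
  have := hd (swap i j a) (swap i j b) (swap i j c)
  have := hi a
  simp only [Perm.mul_apply, swap_apply_def] at *
  grind

lemma prod_X_pow_lehmerCode_mul_swap [CommSemiring R] (hd : IsDominant w) (hij : i.val + 1 = j)
    (hw : w i < w j) :
    (∏ a, X a ^ lehmerCode (w * swap i j) a : MvPolynomial (Fin n) R) =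
      X i * ∏ a, X a ^ lehmerCode w a := by
  have hcode a : lehmerCode w (swap i j a) = lehmerCode w a := by
    have := hd.lehmerCode_eq hij hw
    grind
  simp only [lehmerCode_mul_swap hij hw, hcode, pow_add, prod_mul_distrib, pow_ite, pow_one,
    pow_zero, prod_ite_eq', mem_univ, if_true, mul_comm]

lemma rename_swap_prod_X_pow_lehmerCode [CommSemiring R] (hd : IsDominant w) (hij : i.val + 1 = j)
    (hw : w i < w j) :
    rename (swap i j) (∏ a, X a ^ lehmerCode w a : MvPolynomial (Fin n) R) =
      ∏ a, X a ^ lehmerCode w a := by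
  have hcode a : lehmerCode w (swap i j a) = lehmerCode w a := by
    have := hd.lehmerCode_eq hij hw
    grind
  simp only [map_prod, map_pow, rename_X]
  rw [← Equiv.prod_comp (swap i j)]
  simp only [swap_apply_self, hcode]

end IsDominant

variable [CommRing R]

/-- The polynomials `Sch w` satisfy the recursion by divided differences which determines the
Schubert polynomials, with the divisions cleared. -/
structure IsSchubertFamily (Sch : Perm (Fin n) → MvPolynomial (Fin n) R) : Prop where
  revPerm : Sch Fin.revPerm = ∏ i, X i ^ (n - 1 - i.val)
  X_sub_X_mul : ∀ (w : Perm (Fin n)) (i j : Fin n), i.val + 1 = j → w i < w j →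
    (X i - X j) * Sch w = Sch (w * swap i j) - rename (swap i j) (Sch (w * swap i j))

variable {Sch : Perm (Fin n) → MvPolynomial (Fin n) R}

/-- The contribution of the transposition of `a` and `b` to Monk's rule for `v`. -/
noncomputable def coverTerm (Sch : Perm (Fin n) → MvPolynomial (Fin n) R) (v : Perm (Fin n))
    (a b : Fin n) : MvPolynomial (Fin n) R :=
  if IsBruhatCover v a b then Sch (v * swap a b) else 0

variable [IsDomain R]

namespace IsSchubertFamily

lemma rename_swap (h : IsSchubertFamily Sch) (hij : i.val + 1 = j) (hw : w i < w j) :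
    rename (swap i j) (Sch w) = Sch w := by
  have hrec := h.X_sub_X_mul w i j hij hw
  have hrec' := congrArg (rename (swap i j)) hrec
  have hinv : swap i j ∘ swap i j = id := funext (swap_apply_self i j)
  simp only [map_mul, map_sub, rename_X, rename_rename, hinv, rename_id_apply, swap_apply_left,
    swap_apply_right] at hrec'
  exact mul_left_cancel₀ (X_sub_X_ne_zero (ne_of_apply_ne w hw.ne))
    (by linear_combination -hrec - hrec')

lemma sub_rename_swap (h : IsSchubertFamily Sch) (hij : i.val + 1 = j) (w : Perm (Fin n)) :
    Sch (w * swap i j) - rename (swap i j) (Sch (w * swap i j)) =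
      if w i < w j then (X i - X j) * Sch w else 0 := by
  split_ifs with hw
  · exact (h.X_sub_X_mul w i j hij hw).symm
  · have hne : w j ≠ w i := w.injective.ne (by grind)
    rw [h.rename_swap hij (by simpa using lt_of_le_of_ne (not_lt.1 hw) hne), sub_self]

lemma coverTerm_sub_rename_swap (h : IsSchubertFamily Sch) (hij : i.val + 1 = j) (hv : v i < v j)
    (a b : Fin n) :
    coverTerm Sch (v * swap i j) (swap i j a) (swap i j b) -
        rename (swap i j) (coverTerm Sch (v * swap i j) (swap i j a) (swap i j b)) =
      (X i - X j) * (coverTerm Sch v a b - if a = i ∧ b = j then Sch (v * swap i j) else 0) := by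
  have hlt : i < j := by grind
  by_cases hab : a = i ∧ b = j
  · obtain ⟨rfl, rfl⟩ := hab
    have hcov : IsBruhatCover v a b := ⟨hlt, hv, by grind⟩
    have hcov' : ¬IsBruhatCover (v * swap a b) b a := fun hc ↦ hlt.asymm hc.1
    simp [coverTerm, hcov, hcov']
  by_cases hba : a = j ∧ b = i
  · obtain ⟨rfl, rfl⟩ := hba
    have hcov : ¬IsBruhatCover v a b := fun hc ↦ hlt.asymm hc.1
    have hcov' : ¬IsBruhatCover (v * swap b a) b a := fun hc ↦ hv.asymm (by simpa using hc.2.1)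
    simp [coverTerm, hcov, hcov', hlt.ne']
  have hconj : v * swap i j * swap (swap i j a) (swap i j b) = v * swap a b * swap i j := by
    rw [mul_assoc, mul_assoc, mul_swap_eq_swap_mul, swap_apply_self, swap_apply_self]
  simp only [coverTerm, isBruhatCover_iff_mul_swap hij hv hab hba, if_neg hab, sub_zero, hconj]
  by_cases hcov : IsBruhatCover (v * swap i j) (swap i j a) (swap i j b)
  · simp only [hcov, if_true, true_and, h.sub_rename_swap hij, mul_ite, mul_zero]
  · simp [hcov]

lemma X_mul_of_X_mul_swap (h : IsSchubertFamily Sch) (hij : i.val + 1 = j) (hv : v i < v j)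
    (hmonk : X (swap i j r) * Sch (v * swap i j) =
      ∑ s, coverTerm Sch (v * swap i j) (swap i j r) s -
        ∑ s, coverTerm Sch (v * swap i j) s (swap i j r)) :
    X r * Sch v = ∑ s, coverTerm Sch v r s - ∑ s, coverTerm Sch v s r := by
  have hne : i ≠ j := ne_of_apply_ne v hv.ne
  have hrec := h.X_sub_X_mul v i j hij hv
  have hout := sum_congr rfl fun s (_ : s ∈ univ) ↦ h.coverTerm_sub_rename_swap hij hv r s
  have hin := sum_congr rfl fun s (_ : s ∈ univ) ↦ h.coverTerm_sub_rename_swap hij hv s r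
  rw [sum_sub_distrib, ← map_sum, ← mul_sum, sum_sub_distrib,
    Equiv.sum_comp (swap i j) fun s ↦ coverTerm Sch (v * swap i j) (swap i j r) s] at hout
  rw [sum_sub_distrib, ← map_sum, ← mul_sum, sum_sub_distrib,
    Equiv.sum_comp (swap i j) fun s ↦ coverTerm Sch (v * swap i j) s (swap i j r)] at hin
  have hrename := congrArg (rename (swap i j)) hmonk
  simp only [map_mul, map_sub, rename_X, swap_apply_self] at hrename
  refine mul_left_cancel₀ (X_sub_X_ne_zero hne) ?_
  have hX : (X (swap i j r) - X r) * Sch (v * swap i j) = (X i - X j) *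
      (∑ s, (if s = i ∧ r = j then Sch (v * swap i j) else 0) -
        ∑ s, if r = i ∧ s = j then Sch (v * swap i j) else 0) := by
    rw [swap_apply_def]
    split_ifs with hi hj
    · simp only [hi, hne, and_false, true_and, if_false, sum_const_zero, sum_ite_eq', mem_univ,
        if_true]
      ring
    · simp [hj, hne.symm]
    · simp [hi, hj]
  linear_combination hout - hin + hmonk - hrename + X r * hrec - hX

lemma eq_prod_X_pow_lehmerCode (h : IsSchubertFamily Sch) (hd : IsDominant w) :
    Sch w = ∏ a, X a ^ lehmerCode w a := by
  induction w using ascent_induction with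
  | h w ih =>
  obtain hasc | hasc :=
    Set.eq_empty_or_nonempty {i : Fin n | ∃ j : Fin n, i.val + 1 = j ∧ w i < w j}
  · have hw : w = Fin.revPerm := eq_revPerm_of_forall_not_lt fun i j hij hlt ↦
      Set.eq_empty_iff_forall_notMem.1 hasc i ⟨j, hij, hlt⟩
    have hcode (a : Fin n) : lehmerCode Fin.revPerm a = n - 1 - a.val := by
      simp only [lehmerCode, Fin.revPerm_apply, Fin.rev_lt_rev, and_self, filter_lt_eq_Ioi,
        Fin.card_Ioi]
    simp only [hw, h.revPerm, hcode]
  · obtain ⟨i, ⟨j, hij, hw⟩, hmin⟩ := (Set.toFinite _).exists_minimal hasc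
    have hi a (ha : a < i) : w i < w a := by
      refine strictAntiOn_of_forall_not_lt Set.ordConnected_Iic (fun a _ b hb hab hlt ↦ ?_)
        (Set.mem_Iic.2 ha.le) Set.self_mem_Iic ha
      have := hmin ⟨b, hab, hlt⟩
      grind
    refine mul_left_cancel₀ (X_sub_X_ne_zero (ne_of_apply_ne w hw.ne)) ?_
    rw [h.X_sub_X_mul w i j hij hw, ih i j hij hw (hd.mul_swap hij hw hi),
      hd.prod_X_pow_lehmerCode_mul_swap hij hw, map_mul, rename_X, swap_apply_left,
      hd.rename_swap_prod_X_pow_lehmerCode hij hw, sub_mul]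

lemma apply_one (h : IsSchubertFamily Sch) : Sch 1 = 1 := by
  have hd : IsDominant (1 : Perm (Fin n)) := fun a b c _ hbc _ hcb ↦ hbc.asymm hcb
  have hcode (a : Fin n) : lehmerCode 1 a = 0 :=
    card_eq_zero.2 (filter_eq_empty_iff.2 fun b _ hab ↦ hab.1.asymm hab.2)
  simp only [h.eq_prod_X_pow_lehmerCode hd, hcode, pow_zero, prod_const_one]

-- Here `v` is dominant, and Monk's rule degenerates to `X r * Sch v = Sch (v * swap r s)`.
lemma X_mul_eq_sum_sub_sum_of_unique_ascent (h : IsSchubertFamily Sch) (hrs : r.val + 1 = s)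
    (hv : v r < v s) (huniq : ∀ i j, i.val + 1 = j.val → v i < v j → i = r)
    (hs : ∀ k, r < k → v r < v k → k = s) :
    X r * Sch v = ∑ s, coverTerm Sch v r s - ∑ s, coverTerm Sch v s r := by
  have hleft : StrictAntiOn v (Set.Iic r) :=
    strictAntiOn_of_forall_not_lt Set.ordConnected_Iic fun i _ j _ hij hlt ↦ by
      have := huniq i j hij hlt
      grind
  have hright : StrictAntiOn v (Set.Ioi r) :=
    strictAntiOn_of_forall_not_lt Set.ordConnected_Ioi fun i _ j _ hij hlt ↦ by
      have := huniq i j hij hlt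
      grind
  have hi a (ha : a < r) : v r < v a := hleft ha.le Set.self_mem_Iic ha
  have hd : IsDominant v := fun a b c hab hbc hac hcb ↦ by
    have := hright (a := a) (b := b)
    have := hleft (a := a) (b := b)
    have := hi a
    have := hs c
    grind
  have hcov a : IsBruhatCover v r a ↔ a = s :=
    ⟨fun hc ↦ hs a hc.1 hc.2.1, by rintro rfl; exact ⟨by grind, hv, by grind⟩⟩
  have hcov' a : ¬IsBruhatCover v a r := fun hc ↦ (hi a hc.1).asymm hc.2.1
  simp only [coverTerm, hcov, hcov', if_false, sum_const_zero, sub_zero, sum_ite_eq', mem_univ,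
    if_true, h.eq_prod_X_pow_lehmerCode hd, h.eq_prod_X_pow_lehmerCode (hd.mul_swap hrs hv hi),
    hd.prod_X_pow_lehmerCode_mul_swap hrs hv]

/-- Monk's rule. -/
theorem X_mul_eq_sum_sub_sum (h : IsSchubertFamily Sch) (hr : ∃ s, r < s ∧ v r < v s) :
    X r * Sch v = ∑ s, coverTerm Sch v r s - ∑ s, coverTerm Sch v s r := by
  induction v using ascent_induction generalizing r with
  | h v ih =>
  by_cases hgood : ∃ i j, i.val + 1 = j.val ∧ v i < v j ∧
      ∃ s, r < s ∧ v r < v s ∧ ¬(r = i ∧ s = j)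
  · obtain ⟨i, j, hij, hv, s, hrs, hvs, hne⟩ := hgood
    refine h.X_mul_of_X_mul_swap hij hv (ih i j hij hv ⟨swap i j s, ?_, by simpa using hvs⟩)
    grind
  · push Not at hgood
    obtain ⟨s, hrs, hvs⟩ := hr
    obtain ⟨i, j, hij, hv⟩ : ∃ i j, i.val + 1 = j.val ∧ v i < v j := by
      by_contra! hdesc
      exact hvs.asymm (strictAntiOn_of_forall_not_lt Set.ordConnected_univ
        (fun i _ j _ hij ↦ (hdesc i j hij).not_gt) (Set.mem_univ r) (Set.mem_univ s) hrs)
    obtain ⟨rfl, rfl⟩ := hgood i j hij hv s hrs hvs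
    exact h.X_mul_eq_sum_sub_sum_of_unique_ascent hij hv
      (fun i j hij' hv' ↦ (hgood i j hij' hv' s hrs hvs).1.symm)
      fun k hrk hvk ↦ (hgood r s hij hv k hrk hvk).2

/-- The transition formula of Lascoux and Schützenberger. -/
theorem eq_X_mul_add_sum (h : IsSchubertFamily Sch) (hrs : r < s) (hw : w s < w r)
    (hr : ∀ a b, r < a → a < b → w a < w b) (hs : ∀ b, s < b → w r < w b) :
    Sch w = X r * Sch (w * swap r s) + ∑ q, coverTerm Sch (w * swap r s) q r := by
  have hcov a : IsBruhatCover (w * swap r s) r a ↔ a = s := by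
    constructor
    · rintro ⟨hra, hlt, hbetween⟩
      have := hbetween s
      have := hr a s
      have := hs a
      simp only [Perm.mul_apply, swap_apply_def] at *
      grind
    · rintro rfl
      refine ⟨hrs, by simpa using hw, fun c hrc hca ↦ ?_⟩
      have := hr c a hrc hca
      simp only [Perm.mul_apply, swap_apply_def]
      grind
  have hmonk := h.X_mul_eq_sum_sub_sum (v := w * swap r s) ⟨s, hrs, by simpa using hw⟩
  simp only [coverTerm, hcov, sum_ite_eq', mem_univ, if_true, mul_assoc, swap_mul_self, mul_one]
    at hmonk ⊢
  rw [hmonk, sub_add_cancel]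

end IsSchubertFamily

end SchubertPolynomials

section Transition

open Equiv

variable {n : ℕ} {w : Perm (Fin n)} {p q r s t : Fin n} {I : Finset (Fin n)}

/-- The positions before `p` at which the value of `w` exceeds `j`; the columns of Rothe diagrams
have this form. -/
def largerBefore (w : Perm (Fin n)) (p j : Fin n) : Finset (Fin n) :=
  {i | i < p ∧ j < w i}

lemma mem_largerBefore {i j : Fin n} : i ∈ largerBefore w p j ↔ i < p ∧ j < w i :=
  mem_filter_univ _

lemma colSet_rothe (w : Perm (Fin n)) (j : Fin n) :
    colSet (rothe w) j = largerBefore w (w⁻¹ j) j := by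
  ext
  simp only [colSet, rothe, mem_filter_univ, mem_largerBefore, and_comm]

lemma theta_rothe (u w : Perm (Fin n)) (I : Finset (Fin n)) :
    theta (rothe u) I = ∑ p, schubertRank (largerBefore u (u⁻¹ (w p)) (w p)) I := by
  simp only [theta, thetaCol_eq_schubertRank, colSet_rothe]
  exact (Equiv.sum_comp w fun j ↦ schubertRank (largerBefore u (u⁻¹ j) j) I).symm

lemma largerBefore_mul_swap_left (w : Perm (Fin n)) (hrs : r < s) :
    largerBefore (w * swap r s) r (w s) = largerBefore w r (w s) := by
  ext i
  simp only [mem_largerBefore, Perm.mul_apply]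
  grind

lemma largerBefore_union_filter (hqr : q < r) :
    largerBefore w q (w s) ∪ {i ∈ insert q (largerBefore w r (w s)) | q ≤ i} =
      insert q (largerBefore w r (w s)) := by
  ext i
  simp only [mem_union, mem_insert, mem_filter, mem_largerBefore]
  grind

/-- `(r, s)` is the lexicographically largest inversion of `w`. -/
structure IsLastInversion (w : Perm (Fin n)) (r s : Fin n) : Prop where
  lt : r < s
  apply_lt : w s < w r
  lt_of_lt : ∀ a b, r < a → a < b → w a < w b
  apply_lt_of_lt : ∀ b, s < b → w r < w b

lemma exists_isLastInversion (hw : w ≠ 1) : ∃ r s, IsLastInversion w r s := by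
  have hne : {r | ∃ s, r < s ∧ w s < w r}.Nonempty := by
    by_contra! hempty
    have hmono : StrictMono w := fun a b hab ↦
      lt_of_le_of_ne (not_lt.1 fun hlt ↦ (Set.ext_iff.1 hempty a).1 ⟨b, hab, hlt⟩)
        (w.injective.ne hab.ne)
    exact hw (Equiv.ext (congrFun hmono.eq_id))
  obtain ⟨r, hr, hrmax⟩ := (Set.toFinite _).exists_maximal hne
  obtain ⟨s, ⟨hrs, hsr⟩, hsmax⟩ := (Set.toFinite {s | r < s ∧ w s < w r}).exists_maximal hr
  refine ⟨r, s, hrs, hsr, fun a b hra hab ↦ ?_, fun b hsb ↦ ?_⟩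
  · have := @hrmax a
    have := w.injective.ne hab.ne
    grind
  · have := @hsmax b
    have := w.injective.ne (hrs.trans hsb).ne
    grind

namespace IsLastInversion

lemma largerBefore_self (h : IsLastInversion w r s) :
    largerBefore w s (w s) = insert r (largerBefore w r (w s)) := by
  have := h.lt
  have := h.apply_lt
  ext i
  have := h.lt_of_lt i s
  simp only [mem_insert, mem_largerBefore]
  grind

lemma largerBefore_mul_swap (h : IsLastInversion w r s) (hp : p ≠ s) :
    largerBefore (w * swap r s) (swap r s p) (w p) = largerBefore w p (w p) := by
  have := h.lt
  have := h.apply_lt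
  have := h.lt_of_lt p s
  have := h.apply_lt_of_lt p
  ext i
  have := h.lt_of_lt i s
  simp only [mem_largerBefore, Perm.mul_apply]
  grind

lemma theta_rothe_eq_add_sum (h : IsLastInversion w r s) (I : Finset (Fin n)) :
    theta (rothe w) I = schubertRank (insert r (largerBefore w r (w s))) I +
      ∑ p ∈ univ.erase s, schubertRank (largerBefore w p (w p)) I := by
  simp [theta_rothe w w, ← add_sum_erase univ _ (mem_univ s), h.largerBefore_self]

lemma theta_rothe_mul_swap_eq_add_sum (h : IsLastInversion w r s) (I : Finset (Fin n)) :
    theta (rothe (w * swap r s)) I = schubertRank (largerBefore w r (w s)) I +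
      ∑ p ∈ univ.erase s, schubertRank (largerBefore w p (w p)) I := by
  rw [theta_rothe _ w, ← add_sum_erase univ _ (mem_univ s)]
  congr 1
  · simp [largerBefore_mul_swap_left w h.lt]
  · refine sum_congr rfl fun p hp ↦ ?_
    simp [h.largerBefore_mul_swap (ne_of_mem_erase hp)]

lemma theta_rothe_mul_swap_add_le (h : IsLastInversion w r s) (I : Finset (Fin n)) :
    theta (rothe (w * swap r s)) I + (if r ∈ I then 1 else 0) ≤ theta (rothe w) I := by
  have := schubertRank_add_le_insert (S := largerBefore w r (w s)) (r := r)
    (fun i hi ↦ (mem_largerBefore.1 hi).1) I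
  rw [h.theta_rothe_mul_swap_eq_add_sum, h.theta_rothe_eq_add_sum]
  lia

lemma theta_rothe_mul_swap_add_eq (h : IsLastInversion w r s)
    (hI : r ∉ I → schubertRank (largerBefore w r (w s)) I = cut (largerBefore w r (w s)) I r) :
    theta (rothe (w * swap r s)) I + (if r ∈ I then 1 else 0) = theta (rothe w) I := by
  have := schubertRank_add_eq_insert (fun i hi ↦ (mem_largerBefore.1 hi).1) hI
  rw [h.theta_rothe_mul_swap_eq_add_sum, h.theta_rothe_eq_add_sum]
  lia

lemma isBruhatCover_iff (h : IsLastInversion w r s) :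
    IsBruhatCover (w * swap r s) q r ↔
      q < r ∧ w q < w s ∧ ∀ c, q < c → c < r → w c < w q ∨ w s < w c := by
  have := h.lt
  simp only [IsBruhatCover, Perm.mul_apply]
  grind

lemma largerBefore_mul_swap_mul_swap_top (h : IsLastInversion w r s) (hqr : q < r) :
    largerBefore (w * swap r s * swap q r) q (w s) = largerBefore w q (w s) := by
  have := h.lt
  ext i
  simp only [mem_largerBefore, Perm.mul_apply]
  grind

lemma largerBefore_mul_swap_mul_swap_bot (h : IsLastInversion w r s)
    (hq : IsBruhatCover (w * swap r s) q r) :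
    largerBefore (w * swap r s * swap q r) r (w q) = largerBefore w q (w q) ∪
      {i ∈ insert q (largerBefore w r (w s)) | q ≤ i} := by
  have := h.lt
  obtain ⟨hqr, hqs, hbetween⟩ := h.isBruhatCover_iff.1 hq
  ext i
  have := hbetween i
  simp only [mem_largerBefore, Perm.mul_apply, mem_union, mem_insert, mem_filter]
  grind

lemma largerBefore_mul_swap_mul_swap_of_lt (h : IsLastInversion w r s)
    (hq : IsBruhatCover (w * swap r s) q r) (hrp : r < p) (hqp : w q < w p) (hps : w p < w s) :
    largerBefore (w * swap r s * swap q r) (swap q r (swap r s p)) (w p) =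
      insert q (largerBefore w r (w p)) := by
  have := h.lt
  have := h.apply_lt
  have := h.apply_lt_of_lt p
  have hqr := hq.1
  have hp : swap q r (swap r s p) = p := by grind
  ext i
  have := h.lt_of_lt i p
  simp only [hp, mem_largerBefore, Perm.mul_apply, mem_insert]
  obtain hir | rfl | hri := lt_trichotomy i r <;> grind

lemma largerBefore_eq_insert (h : IsLastInversion w r s) (hrp : r < p) (hps : w p < w s) :
    largerBefore w p (w p) = insert r (largerBefore w r (w p)) := by
  have := h.apply_lt
  ext i
  have := h.lt_of_lt i p
  simp only [mem_largerBefore, mem_insert]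
  grind

lemma largerBefore_mul_swap_mul_swap (h : IsLastInversion w r s)
    (hq : IsBruhatCover (w * swap r s) q r) (hps : p ≠ s) (hpq : p ≠ q)
    (hp : ¬(r < p ∧ w q < w p ∧ w p < w s)) :
    largerBefore (w * swap r s * swap q r) (swap q r (swap r s p)) (w p) =
      largerBefore w p (w p) := by
  have hrs := h.lt
  have hrs' := h.apply_lt
  obtain ⟨hqr, hqs, hbetween⟩ := h.isBruhatCover_iff.1 hq
  obtain rfl | hpr := eq_or_ne p r
  · have hp : swap q p (swap p s p) = s := by grind
    ext i
    have := h.lt_of_lt i s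
    simp only [hp, mem_largerBefore, Perm.mul_apply]
    grind
  · have hp : swap q r (swap r s p) = p := by grind
    have := h.apply_lt_of_lt p
    have := h.lt_of_lt p s
    have := hbetween p
    have := w.injective.ne hps
    have := w.injective.ne hpq
    ext i
    simp only [hp, mem_largerBefore, Perm.mul_apply]
    obtain rfl | hiq := eq_or_ne i q
    · grind
    obtain rfl | hir := eq_or_ne i r <;> grind

lemma theta_rothe_eq_add_add_sum (h : IsLastInversion w r s) (hqs : q ≠ s) (I : Finset (Fin n)) :
    theta (rothe w) I = schubertRank (largerBefore w q (w q)) I +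
      schubertRank (insert r (largerBefore w r (w s))) I +
      ∑ p ∈ {q, s}ᶜ, schubertRank (largerBefore w p (w p)) I := by
  simp [theta_rothe w w, ← sum_add_sum_compl {q, s}, sum_pair hqs, h.largerBefore_self]

lemma theta_rothe_mul_swap_mul_swap_eq_add_add_sum (h : IsLastInversion w r s)
    (hq : IsBruhatCover (w * swap r s) q r) (I : Finset (Fin n)) :
    theta (rothe (w * swap r s * swap q r)) I =
      schubertRank (largerBefore w q (w q) ∪
        {i ∈ insert q (largerBefore w r (w s)) | q ≤ i}) I +
      schubertRank (largerBefore w q (w s)) I +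
      ∑ p ∈ {q, s}ᶜ, schubertRank
        (largerBefore (w * swap r s * swap q r) (swap q r (swap r s p)) (w p)) I := by
  have hqs : q < s := hq.1.trans h.lt
  simp [theta_rothe _ w, ← sum_add_sum_compl {q, s}, sum_pair hqs.ne,
    ← h.largerBefore_mul_swap_mul_swap_top hq.1, ← h.largerBefore_mul_swap_mul_swap_bot hq,
    swap_apply_of_ne_of_ne hq.1.ne hqs.ne]

lemma theta_rothe_mul_swap_mul_swap_le (h : IsLastInversion w r s)
    (hq : IsBruhatCover (w * swap r s) q r) (I : Finset (Fin n)) :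
    theta (rothe (w * swap r s * swap q r)) I ≤ theta (rothe w) I := by
  obtain ⟨hqr, hqs, -⟩ := h.isBruhatCover_iff.1 hq
  rw [h.theta_rothe_eq_add_add_sum (hqr.trans h.lt).ne,
    h.theta_rothe_mul_swap_mul_swap_eq_add_add_sum hq]
  refine add_le_add ?_ (sum_le_sum fun p hp ↦ ?_)
  · have hunion := schubertRank_union_add_le (A := largerBefore w q (w s))
      (S := largerBefore w q (w q)) (T := {i ∈ insert q (largerBefore w r (w s)) | q ≤ i})
      (q := q) (by grind [mem_largerBefore]) (by grind [mem_largerBefore]) (by grind) I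
    rw [largerBefore_union_filter hqr] at hunion
    have hinsert := schubertRank_insert_le_insert (S := largerBefore w r (w s)) hqr
      (by grind [mem_largerBefore]) (by grind [mem_largerBefore]) I
    lia
  · simp only [mem_compl, mem_insert, mem_singleton, not_or] at hp
    by_cases hp' : r < p ∧ w q < w p ∧ w p < w s
    · obtain ⟨hrp, hqp, hps⟩ := hp'
      rw [h.largerBefore_mul_swap_mul_swap_of_lt hq hrp hqp hps, h.largerBefore_eq_insert hrp hps]
      exact schubertRank_insert_le_insert hqr (by grind [mem_largerBefore])
        (by grind [mem_largerBefore]) I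
    · rw [h.largerBefore_mul_swap_mul_swap hq hp.2 hp.1 hp']

lemma theta_rothe_mul_swap_mul_swap_eq (h : IsLastInversion w r s)
    (hq : IsBruhatCover (w * swap r s) q r) (htq : t ≤ q)
    (hmax : ∀ i, t ≤ i → i < r → w i ≤ w q ∨ w s < w i)
    (hcrit : IsCriticalRow (largerBefore w r (w s)) I t r) :
    theta (rothe (w * swap r s * swap q r)) I = theta (rothe w) I := by
  obtain ⟨hqr, hqs, -⟩ := h.isBruhatCover_iff.1 hq
  rw [h.theta_rothe_eq_add_add_sum (hqr.trans h.lt).ne,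
    h.theta_rothe_mul_swap_mul_swap_eq_add_add_sum hq]
  congr 1
  · have hunion := hcrit.schubertRank_union_add_eq (A := largerBefore w q (w s))
      (S := largerBefore w q (w q)) (T := {i ∈ insert q (largerBefore w r (w s)) | q ≤ i})
      htq (by grind [mem_largerBefore]) (largerBefore_union_filter hqr)
      (by grind [mem_largerBefore]) (by grind [mem_largerBefore]) (by grind)
      (by grind [mem_largerBefore])
    have hinsert := hcrit.schubertRank_insert_eq_insert (D := largerBefore w r (w s)) htq hqr
      (by grind [mem_largerBefore]) (by grind [mem_largerBefore]) (fun _ _ ↦ Iff.rfl)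
    rw [largerBefore_union_filter hqr] at hunion
    lia
  · refine sum_congr rfl fun p hp ↦ ?_
    simp only [mem_compl, mem_insert, mem_singleton, not_or] at hp
    by_cases hp' : r < p ∧ w q < w p ∧ w p < w s
    · obtain ⟨hrp, hqp, hps⟩ := hp'
      rw [h.largerBefore_mul_swap_mul_swap_of_lt hq hrp hqp hps, h.largerBefore_eq_insert hrp hps]
      exact hcrit.schubertRank_insert_eq_insert htq hqr (by grind [mem_largerBefore])
        (by grind [mem_largerBefore]) (by grind [mem_largerBefore])
    · rw [h.largerBefore_mul_swap_mul_swap hq hp.2 hp.1 hp']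

lemma exists_isBruhatCover (h : IsLastInversion w r s) (htr : t < r)
    (ht : t ∉ largerBefore w r (w s)) :
    ∃ q, IsBruhatCover (w * swap r s) q r ∧ t ≤ q ∧
      ∀ i, t ≤ i → i < r → w i ≤ w q ∨ w s < w i := by
  have hts : w t < w s := by
    have := w.injective.ne (htr.trans h.lt).ne
    grind [mem_largerBefore]
  obtain ⟨q, hq, hmax⟩ := exists_max_image {i | t ≤ i ∧ i < r ∧ w i < w s} w ⟨t, by grind⟩
  simp only [mem_filter_univ] at hq hmax
  have hmax' i (hti : t ≤ i) (hir : i < r) : w i ≤ w q ∨ w s < w i := by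
    have := w.injective.ne (hir.trans h.lt).ne
    grind
  refine ⟨q, h.isBruhatCover_iff.2 ⟨hq.2.1, hq.2.2, fun c hqc hcr ↦ ?_⟩, hq.1, hmax'⟩
  have := hmax' c (hq.1.trans hqc.le) hcr
  have := w.injective.ne hqc.ne'
  grind

lemma card_rothe_mul_swap (h : IsLastInversion w r s) :
    #(rothe (w * swap r s)) + 1 = #(rothe w) := by
  have := h.theta_rothe_mul_swap_add_eq (I := univ) (by simp)
  simpa [theta_univ] using this

lemma card_rothe_mul_swap_mul_swap (h : IsLastInversion w r s)
    (hq : IsBruhatCover (w * swap r s) q r) :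
    #(rothe (w * swap r s * swap q r)) = #(rothe w) := by
  obtain ⟨-, hqs, hbetween⟩ := h.isBruhatCover_iff.1 hq
  have := h.theta_rothe_mul_swap_mul_swap_eq hq le_rfl (I := univ) (by grind)
    (isCriticalRow_univ (by grind [mem_largerBefore]) r)
  simpa [theta_univ] using this

end IsLastInversion

lemma transition_induction {P : Perm (Fin n) → Prop} (one : P 1)
    (step : ∀ w r s, IsLastInversion w r s → P (w * swap r s) →
      (∀ q, IsBruhatCover (w * swap r s) q r → P (w * swap r s * swap q r)) → P w)
    (w : Perm (Fin n)) : P w := by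
  induction hm : #(rothe w) using Nat.strong_induction_on generalizing w with
  | h m ihcard =>
  induction w using wellFounded_toLex_gt.induction with
  | h w ihlex =>
  obtain rfl | hw := eq_or_ne w 1
  · exact one
  obtain ⟨r, s, h⟩ := exists_isLastInversion hw
  have hcard := h.card_rothe_mul_swap
  refine step w r s h (ihcard _ (by lia) _ rfl) fun q hq ↦ ?_
  obtain ⟨hqr, hqs, -⟩ := h.isBruhatCover_iff.1 hq
  refine ihlex _ ⟨q, fun k hk ↦ ?_, ?_⟩ ((h.card_rothe_mul_swap_mul_swap hq).trans hm)
  · change k < q at hk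
    have := h.lt
    change w k = w (swap r s (swap q r k))
    rw [swap_apply_of_ne_of_ne, swap_apply_of_ne_of_ne] <;> grind
  · simpa using hqs

end Transition

section RotheSchubitope

open Equiv

variable {n : ℕ} {w : Perm (Fin n)} {r s : Fin n} {R : Type*} [CommRing R] [IsDomain R]
  [PartialOrder R] [IsOrderedRing R] {Sch : Perm (Fin n) → MvPolynomial (Fin n) R}

namespace IsSchubertFamily

lemma coeff_nonneg (h : IsSchubertFamily Sch) (w : Perm (Fin n)) (d : Fin n →₀ ℕ) :
    0 ≤ (Sch w).coeff d := by
  induction w using transition_induction generalizing d with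
  | one =>
    rw [h.apply_one, coeff_one]
    split_ifs
    exacts [zero_le_one, le_rfl]
  | step w r s hrs hv hq =>
    rw [h.eq_X_mul_add_sum hrs.lt hrs.apply_lt hrs.lt_of_lt hrs.apply_lt_of_lt, coeff_add,
      coeff_sum]
    refine add_nonneg (coeff_X_mul_nonneg hv r d) (sum_nonneg fun q _ ↦ ?_)
    rw [coverTerm]
    split_ifs with hcov
    exacts [hq q hcov d, le_rfl]

lemma mem_support_iff (h : IsSchubertFamily Sch) (hrs : IsLastInversion w r s)
    {d : Fin n →₀ ℕ} :
    d ∈ (Sch w).support ↔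
      (∃ e ∈ (Sch (w * swap r s)).support, Finsupp.single r 1 + e = d) ∨
        ∃ q, IsBruhatCover (w * swap r s) q r ∧ d ∈ (Sch (w * swap r s * swap q r)).support := by
  have hterm q : 0 ≤ (coverTerm Sch (w * swap r s) q r).coeff d := by
    rw [coverTerm]
    split_ifs
    exacts [h.coeff_nonneg _ d, le_rfl]
  have hmem q : d ∈ (coverTerm Sch (w * swap r s) q r).support ↔
      IsBruhatCover (w * swap r s) q r ∧ d ∈ (Sch (w * swap r s * swap q r)).support := by
    rw [coverTerm]
    split_ifs with hcov <;> simp [hcov]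
  rw [h.eq_X_mul_add_sum hrs.lt hrs.apply_lt hrs.lt_of_lt hrs.apply_lt_of_lt,
    mem_support_add_of_coeff_nonneg (coeff_X_mul_nonneg (h.coeff_nonneg _) r d)
      (by simpa only [coeff_sum] using sum_nonneg fun q _ ↦ hterm q),
    mem_support_sum_of_coeff_nonneg fun q _ ↦ hterm q]
  simp only [support_X_mul, mem_map, addLeftEmbedding_apply, mem_univ, true_and, hmem]

end IsSchubertFamily

lemma spansSchubitope_rothe_one : SpansSchubitope (rothe (1 : Perm (Fin n))) {0} := by
  have htheta (I : Finset (Fin n)) : theta (rothe (1 : Perm (Fin n))) I = 0 := by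
    have hempty (p : Fin n) : largerBefore 1 p p = ∅ :=
      filter_eq_empty_iff.2 fun i _ hi ↦ hi.1.asymm hi.2
    simp [theta_rothe 1 1, hempty, schubertRank_empty]
  constructor <;> simp [htheta]

lemma IsLastInversion.spansSchubitope (h : IsLastInversion w r s)
    {A : Perm (Fin n) → Set (Fin n →₀ ℕ)}
    (hA : ∀ d, d ∈ A w ↔ (∃ e ∈ A (w * swap r s), Finsupp.single r 1 + e = d) ∨
      ∃ q, IsBruhatCover (w * swap r s) q r ∧ d ∈ A (w * swap r s * swap q r))
    (hv : SpansSchubitope (rothe (w * swap r s)) (A (w * swap r s)))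
    (hq : ∀ q, IsBruhatCover (w * swap r s) q r →
      SpansSchubitope (rothe (w * swap r s * swap q r)) (A (w * swap r s * swap q r))) :
    SpansSchubitope (rothe w) (A w) where
  sum_univ_eq d hd := by
    obtain ⟨e, he, rfl⟩ | ⟨q, hcov, hd⟩ := (hA d).1 hd
    · simp only [sum_single_add, mem_univ, if_true, hv.sum_univ_eq e he, theta_univ,
        h.card_rothe_mul_swap]
    · rw [(hq q hcov).sum_univ_eq d hd, theta_univ, theta_univ, h.card_rothe_mul_swap_mul_swap hcov]
  sum_le d hd I := by
    obtain ⟨e, he, rfl⟩ | ⟨q, hcov, hd⟩ := (hA d).1 hd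
    · rw [sum_single_add]
      exact (Nat.add_le_add_right (hv.sum_le e he I) _).trans (h.theta_rothe_mul_swap_add_le I)
    · exact ((hq q hcov).sum_le d hd I).trans (h.theta_rothe_mul_swap_mul_swap_le hcov I)
  exists_tight 𝒥 h𝒥 := by
    obtain hcut | ⟨t, htr, ht, hcrit⟩ :=
      exists_isCriticalRow h𝒥 (S := largerBefore w r (w s)) fun i hi ↦ (mem_largerBefore.1 hi).1
    · obtain ⟨e, he, htight⟩ := hv.exists_tight 𝒥 h𝒥
      refine ⟨_, (hA _).2 (.inl ⟨e, he, rfl⟩), fun I hI ↦ ?_⟩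
      rw [sum_single_add, htight I hI, h.theta_rothe_mul_swap_add_eq (hcut I hI)]
    · obtain ⟨q, hcov, htq, hmax⟩ := h.exists_isBruhatCover htr ht
      obtain ⟨d, hd, htight⟩ := (hq q hcov).exists_tight 𝒥 h𝒥
      refine ⟨d, (hA d).2 (.inr ⟨q, hcov, hd⟩), fun I hI ↦ ?_⟩
      rw [htight I hI, h.theta_rothe_mul_swap_mul_swap_eq hcov htq hmax (hcrit I hI)]

theorem IsSchubertFamily.spansSchubitope_support (h : IsSchubertFamily Sch) (w : Perm (Fin n)) :
    SpansSchubitope (rothe w) (Sch w).support := by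
  induction w using transition_induction with
  | one => simpa [h.apply_one] using spansSchubitope_rothe_one
  | step w r s hrs hv hq =>
    exact hrs.spansSchubitope (A := fun w ↦ (Sch w).support) (fun _ ↦ h.mem_support_iff hrs) hv hq

end RotheSchubitope

/-- The Newton polytope of the Schubert polynomial `𝔖_w` equals the Schubitope
`S_{D(w)}` of the Rothe diagram of `w`. -/
theorem stmt10 (n : ℕ) (Schub : Equiv.Perm (Fin n) → MvPolynomial (Fin n) ℤ)
    -- `𝔖_{w₀} = x_1^{n-1} x_2^{n-2} ⋯ x_{n-1}` for the longest permutation `w₀`.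
    (hbase : Schub Fin.revPerm = ∏ i : Fin n, X i ^ (n - 1 - (i : ℕ)))
    -- For adjacent positions `i, j = i+1` with `w(i) < w(j)`: `𝔖_w = ∂_i 𝔖_{w sᵢ}`, i.e.
    -- `(xᵢ - xⱼ) ⬝ 𝔖_w = 𝔖_{w sᵢ} - sᵢ ⬝ 𝔖_{w sᵢ}`.
    (hrec : ∀ (w : Equiv.Perm (Fin n)) (i j : Fin n), (i : ℕ) + 1 = (j : ℕ) → w i < w j →
      (X i - X j) * Schub w =
        Schub (w * Equiv.swap i j) -
          rename (Equiv.swap i j) (Schub (w * Equiv.swap i j)))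
    (w : Equiv.Perm (Fin n)) :
    newtonPolytope (Schub w) = schubitope (rothe w) := by
  have hSchub : IsSchubertFamily Schub := ⟨hbase, hrec⟩
  exact (hSchub.spansSchubitope_support w).newtonPolytope_eq
end

section
/- For every composition α (a finitely supported sequence of nonnegative integers), the key polynomial κ_α has saturated Newton polytope: every lattice point of the Newton polytope of κ_α is the exponent vector of a monomial appearing with nonzero coefficient in κ_α. -/
open Finset MvPolynomial

/-- The Newton polytope of a polynomial in the variables `x_1, x_2, …`. -/
def newtonPolytopeNat (f : MvPolynomial ℕ ℤ) : Set (ℕ → ℝ) :=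
  convexHull ℝ ((fun (d : ℕ →₀ ℕ) (i : ℕ) => ((d i : ℕ) : ℝ)) '' ↑f.support)

/-!
The key polynomial of `α` is the character of the Demazure crystal of `α`, realized on tableaux
given by their columns. For adjacent letters, this crystal meets every string of the operators `ẽ`
and `f̃` in the whole string, in its top element, or not at all, and the symmetry of strings, with
or without their top elements, turns this into the divided difference recursion. In
particular the coefficients are nonnegative, so the support is the set of contents of the tableaux.

Passing from `α̂` to `α` replaces every point of the support by its segment towards its reflection
in the hyperplane `m i = m (i + 1)`. On the other side, the support functions of the Bruhat
intervals below compositions are submodular, and passing from `α̂` to `α` composes them with the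
compression that replaces `i + 1` by `i` in a set; this has the same effect on the lattice points of
the generalized permutahedra they define. Hence the support consists of all lattice points of a
polytope cut out by linear inequalities, which therefore contains the Newton polytope.
-/

section Swap

variable {ι : Type*} [DecidableEq ι] {a b j : ι} {m : ι →₀ ℕ} {S : Finset ι}

/-- The action of the transposition of `a` and `b` on exponent vectors: `α̂` in the recursion for
key polynomials. -/
def swapEntries (a b : ι) (m : ι →₀ ℕ) : ι →₀ ℕ := Finsupp.equivMapDomain (Equiv.swap a b) m

/-- The action of the transposition of `a` and `b` on sets of letters. -/
def swapLetters (a b : ι) (S : Finset ι) : Finset ι := S.map (Equiv.swap a b).toEmbedding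

@[simp] theorem swapEntries_apply (a b j : ι) (m : ι →₀ ℕ) :
    swapEntries a b m j = m (Equiv.swap a b j) := by
  simp [swapEntries]

theorem swapEntries_apply_of_ne (ha : j ≠ a) (hb : j ≠ b) : swapEntries a b m j = m j := by
  rw [swapEntries_apply, Equiv.swap_apply_of_ne_of_ne ha hb]

@[simp] theorem swapEntries_swapEntries (a b : ι) (m : ι →₀ ℕ) :
    swapEntries a b (swapEntries a b m) = m := by
  ext j; simp

@[simp] theorem swapEntries_zero (a b : ι) : swapEntries a b 0 = 0 :=
  Finsupp.equivMapDomain_zero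

theorem swapEntries_comm (a b : ι) (m : ι →₀ ℕ) : swapEntries a b m = swapEntries b a m := by
  rw [swapEntries, swapEntries, Equiv.swap_comm]

theorem swapEntries_ne_zero (h : m ≠ 0) : swapEntries a b m ≠ 0 := by
  contrapose! h
  rw [← swapEntries_swapEntries a b m, h, swapEntries_zero]

@[simp] theorem degree_swapEntries (a b : ι) (m : ι →₀ ℕ) :
    (swapEntries a b m).degree = m.degree := by
  rw [swapEntries, Finsupp.equivMapDomain_eq_mapDomain, Finsupp.degree_mapDomain]

theorem swapEntries_add_single {n : ℕ} (h : m b = m a + n) :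
    swapEntries a b m + Finsupp.single b n = m + Finsupp.single a n := by
  rcases eq_or_ne a b with rfl | hab
  · obtain rfl : n = 0 := by omega
    ext j; simp
  ext j
  obtain rfl | ha := eq_or_ne j a
  · simp [h, hab]
  obtain rfl | hb := eq_or_ne j b
  · simp [h, hab]
  simp [Equiv.swap_apply_of_ne_of_ne ha hb, ha, hb]

theorem swapEntries_eq_self (h : m a = m b) : swapEntries a b m = m := by
  simpa using swapEntries_add_single (m := m) (a := a) (b := b) (n := 0) h.symm

@[simp] theorem mem_swapLetters : j ∈ swapLetters a b S ↔ Equiv.swap a b j ∈ S := by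
  rw [swapLetters, Finset.mem_map_equiv, Equiv.symm_swap]

@[simp] theorem swapLetters_swapLetters (a b : ι) (S : Finset ι) :
    swapLetters a b (swapLetters a b S) = S := by
  ext j; simp

theorem swapLetters_eq_self (h : a ∈ S ↔ b ∈ S) : swapLetters a b S = S := by
  ext j
  rw [mem_swapLetters, Equiv.swap_apply_def]
  split_ifs <;> simp_all

theorem support_swapEntries (a b : ι) (m : ι →₀ ℕ) :
    (swapEntries a b m).support = swapLetters a b m.support := rfl

theorem sum_swapLetters (a b : ι) (S : Finset ι) (m : ι →₀ ℕ) :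
    ∑ j ∈ swapLetters a b S, m j = ∑ j ∈ S, swapEntries a b m j := by
  simp [swapLetters, Finset.sum_map]

end Swap

section SubmodularFunction

variable {ι : Type*} {a b : ι} {r : Finset ι → ℕ} {n : ℕ}

/-- The lattice points of the generalized permutahedron (base polytope) with rank function `r` in
the hyperplane of degree `n`; the total `n` stands for the rank of the whole, possibly infinite,
ground set. -/
structure IsBasePoint (r : Finset ι → ℕ) (n : ℕ) (m : ι →₀ ℕ) : Prop where
  degree_eq : m.degree = n
  sum_le (I : Finset ι) : ∑ j ∈ I, m j ≤ r I

theorem isBasePoint_sum_iff {m m' : ι →₀ ℕ} :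
    IsBasePoint (fun I => ∑ j ∈ I, m' j) m'.degree m ↔ m = m' := by
  refine ⟨fun h => ?_, fun h => h ▸ ⟨rfl, fun _ => le_rfl⟩⟩
  have hle : m ≤ m' := fun j => by simpa using h.sum_le {j}
  have hdeg : (m' - m).degree = 0 := by
    have := congrArg Finsupp.degree (tsub_add_cancel_of_le hle)
    rw [map_add, h.degree_eq] at this
    omega
  exact hle.antisymm (tsub_eq_zero_iff_le.1 ((Finsupp.degree_eq_zero_iff _).1 hdeg))

theorem degree_eq_of_add_single_eq {m m' : ι →₀ ℕ} {k : ℕ}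
    (h : m + Finsupp.single a k = m' + Finsupp.single b k) : m.degree = m'.degree := by
  simpa using congrArg Finsupp.degree h

variable [DecidableEq ι]

/-- Submodular set functions: these are the rank functions of generalized permutahedra. -/
def IsSubmodular (r : Finset ι → ℕ) : Prop :=
  ∀ I J, r (I ∪ J) + r (I ∩ J) ≤ r I + r J

/-- `m` lies on the segment from `m'` to its reflection `swapEntries a b m'`, where
`m' b ≤ m' a`. -/
def InSwapSegment (a b : ι) (m' m : ι →₀ ℕ) : Prop :=
  ∃ k, m' b + k ≤ m' a ∧ m + Finsupp.single a k = m' + Finsupp.single b k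

theorem compress_singleton (a b : ι) (I : Finset ι) :
    UV.compress {a} {b} I = if a ∉ I ∧ b ∈ I then swapLetters a b I else I := by
  simp only [UV.compress, Finset.disjoint_singleton_left,
    Finset.singleton_subset_iff]
  split_ifs with h
  · ext j
    simp only [Finset.sup_eq_union, mem_sdiff, mem_union, mem_singleton, mem_swapLetters,
      Equiv.swap_apply_def]
    split_ifs <;> grind
  · rfl

theorem compress_singleton_eq_self {I : Finset ι} (hI : a ∈ I ∨ b ∉ I) :
    UV.compress {a} {b} I = I := by
  rw [compress_singleton, if_neg (by tauto)]

theorem compress_swapLetters (a b : ι) (I : Finset ι) :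
    UV.compress {a} {b} (swapLetters a b I) = UV.compress {a} {b} I := by
  simp only [compress_singleton, mem_swapLetters, Equiv.swap_apply_left, Equiv.swap_apply_right,
    swapLetters_swapLetters]
  split_ifs
  · tauto
  · rfl
  · rfl
  · exact swapLetters_eq_self (by tauto)

theorem mem_compress_singleton {j : ι} {I : Finset ι} :
    j ∈ UV.compress {a} {b} I ↔
      if j = a then a ∈ I ∨ b ∈ I else if j = b then a ∈ I ∧ b ∈ I else j ∈ I := by
  rw [compress_singleton]
  split_ifs <;> simp_all [Equiv.swap_apply_of_ne_of_ne] <;> tauto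

/-- Submodularity of `r` gives the inequality up to the exchange of `a` and `b` in a single set,
which costs nothing because `r` grows under compression. -/
theorem IsSubmodular.comp_compress_of_mem_of_mem (hr : IsSubmodular r)
    (hC : ∀ I, r I ≤ r (UV.compress {a} {b} I)) {I J : Finset ι}
    (haI : a ∈ I) (hbI : b ∉ I) (haJ : a ∉ J) (hbJ : b ∈ J) :
    r (I ∪ J) + r (I ∩ J) ≤ r I + r (UV.compress {a} {b} J) := by
  set D := I ∩ J with hD
  set V := (I ∪ J) \ {a, b} with hV
  have hcJ : UV.compress {a} {b} J = insert a (J.erase b) := by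
    ext j; rw [mem_compress_singleton]; grind
  have hcV : UV.compress {a} {b} (insert b V) = insert a V := by
    ext j; rw [mem_compress_singleton]; grind
  have h₁ : r (insert a V) + r (insert a D) ≤ r I + r (UV.compress {a} {b} J) := by
    convert hr I (UV.compress {a} {b} J) using 3 <;> rw [hcJ] <;> grind
  have h₂ : r (insert a V) + r D ≤ r (insert a D) + r V := by
    convert hr (insert a D) V using 3 <;> grind
  have h₃ : r (I ∪ J) + r V ≤ r (insert a V) + r (insert b V) := by
    convert hr (insert a V) (insert b V) using 3 <;> grind
  have h₄ : r (insert b V) ≤ r (insert a V) := hcV ▸ hC _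
  omega

theorem IsSubmodular.comp_compress (hr : IsSubmodular r)
    (hC : ∀ I, r I ≤ r (UV.compress {a} {b} I)) :
    IsSubmodular fun I => r (UV.compress {a} {b} I) := by
  have hsep {I J : Finset ι} (haI : a ∈ I) (hbI : b ∉ I) (haJ : a ∉ J) (hbJ : b ∈ J) :
      r (UV.compress {a} {b} (I ∪ J)) + r (UV.compress {a} {b} (I ∩ J)) ≤
        r (UV.compress {a} {b} I) + r (UV.compress {a} {b} J) := by
    rw [compress_singleton_eq_self (by simp [haI]), compress_singleton_eq_self (by simp [hbI]),
      compress_singleton_eq_self (.inl haI)]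
    exact hr.comp_compress_of_mem_of_mem hC haI hbI haJ hbJ
  intro I J
  by_cases hIJ : a ∈ I ∧ b ∉ I ∧ a ∉ J ∧ b ∈ J
  · exact hsep hIJ.1 hIJ.2.1 hIJ.2.2.1 hIJ.2.2.2
  by_cases hJI : a ∈ J ∧ b ∉ J ∧ a ∉ I ∧ b ∈ I
  · rw [union_comm, inter_comm, add_comm (r (UV.compress {a} {b} I))]
    exact hsep hJI.1 hJI.2.1 hJI.2.2.1 hJI.2.2.2
  have hunion : UV.compress {a} {b} (I ∪ J) = UV.compress {a} {b} I ∪ UV.compress {a} {b} J := by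
    ext j
    simp only [mem_union, mem_compress_singleton]
    split_ifs <;> tauto
  have hinter : UV.compress {a} {b} (I ∩ J) = UV.compress {a} {b} I ∩ UV.compress {a} {b} J := by
    ext j
    simp only [mem_inter, mem_compress_singleton]
    split_ifs <;> tauto
  simp only [hunion, hinter]
  exact hr _ _

theorem sum_add_ite_of_add_single_eq {m m' : ι →₀ ℕ} {k : ℕ}
    (h : m + Finsupp.single a k = m' + Finsupp.single b k) (I : Finset ι) :
    ∑ j ∈ I, m j + (if a ∈ I then k else 0) = ∑ j ∈ I, m' j + (if b ∈ I then k else 0) := by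
  simpa [Finset.sum_add_distrib, Finsupp.single_apply] using
    congrArg (fun p : ι →₀ ℕ => ∑ j ∈ I, p j) h

theorem IsBasePoint.swapEntries_comp_compress {m : ι →₀ ℕ}
    (h : IsBasePoint (fun I => r (UV.compress {a} {b} I)) n m) :
    IsBasePoint (fun I => r (UV.compress {a} {b} I)) n (swapEntries a b m) where
  degree_eq := by rw [degree_swapEntries, h.degree_eq]
  sum_le I := by
    rw [← sum_swapLetters, ← compress_swapLetters]
    exact h.sum_le _

theorem IsBasePoint.of_inSwapSegment {m m' : ι →₀ ℕ} (hC : ∀ I, r I ≤ r (UV.compress {a} {b} I))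
    (hm' : IsBasePoint r n m') (h : InSwapSegment a b m' m) :
    IsBasePoint (fun I => r (UV.compress {a} {b} I)) n m := by
  obtain ⟨k, hk, hmm'⟩ := h
  refine ⟨by rw [degree_eq_of_add_single_eq hmm', hm'.degree_eq], fun I => ?_⟩
  have hsum := sum_add_ite_of_add_single_eq hmm' I
  by_cases hI : a ∉ I ∧ b ∈ I
  · have hswap : ∑ j ∈ I, swapEntries a b m' j + m' b = ∑ j ∈ I, m' j + m' a := by
      rw [← add_sum_erase I _ hI.2, ← add_sum_erase I (fun j => m' j) hI.2,
        sum_congr rfl fun j hj => swapEntries_apply_of_ne (m := m') (a := a) (b := b)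
          (by grind) (by grind)]
      simp only [swapEntries_apply, Equiv.swap_apply_right]
      ring
    have hle := hm'.sum_le (swapLetters a b I)
    rw [sum_swapLetters] at hle
    simp only [compress_singleton, if_pos hI]
    simp only [hI, if_true, if_false] at hsum
    omega
  · refine le_trans ?_ ((hm'.sum_le I).trans (hC I))
    split_ifs at hsum <;> first | omega | tauto

theorem IsBasePoint.sum_le_of_comp_compress {m : ι →₀ ℕ}
    (h : IsBasePoint (fun I => r (UV.compress {a} {b} I)) n m) {I : Finset ι}
    (hI : a ∈ I ∨ b ∉ I) : ∑ j ∈ I, m j ≤ r I := by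
  simpa only [compress_singleton_eq_self hI] using h.sum_le I

theorem IsBasePoint.sum_le_add_of_comp_compress {m : ι →₀ ℕ} (hmono : Monotone r)
    (h : IsBasePoint (fun I => r (UV.compress {a} {b} I)) n m) {I : Finset ι} (hb : b ∈ I) :
    ∑ j ∈ I, m j ≤ r I + m b := by
  rw [← sum_erase_add I (fun j => m j) hb]
  gcongr
  exact (h.sum_le_of_comp_compress (.inr (notMem_erase b I))).trans (hmono (erase_subset b I))

/-- The least `k` for which moving `k` units from `b` to `a` restores all the constraints works:
any set that would become violated would, by submodularity, contradict a set making `k`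
necessary. -/
theorem IsBasePoint.exists_of_comp_compress {m : ι →₀ ℕ} (hr : IsSubmodular r)
    (hmono : Monotone r) (h : IsBasePoint (fun I => r (UV.compress {a} {b} I)) n m) :
    ∃ k m', IsBasePoint r n m' ∧ m + Finsupp.single a k = m' + Finsupp.single b k := by
  have hle {I : Finset ι} (hI : a ∈ I ∨ b ∉ I) : ∑ j ∈ I, m j ≤ r I :=
    h.sum_le_of_comp_compress hI
  classical
  obtain ⟨k, hk, hkb, hmin⟩ : ∃ k, (∀ I : Finset ι, a ∉ I → b ∈ I → ∑ j ∈ I, m j ≤ r I + k) ∧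
      k ≤ m b ∧ ∀ l < k, ∃ J : Finset ι, r J + l < ∑ j ∈ J, m j := by
    have hbound : ∀ I : Finset ι, a ∉ I → b ∈ I → ∑ j ∈ I, m j ≤ r I + m b :=
      fun _ _ => h.sum_le_add_of_comp_compress hmono
    have hex : ∃ k, ∀ I : Finset ι, a ∉ I → b ∈ I → ∑ j ∈ I, m j ≤ r I + k := ⟨m b, hbound⟩
    exact ⟨Nat.find hex, Nat.find_spec hex, Nat.find_min' hex hbound,
      fun l hl => by
        obtain ⟨J, -, -, hJ⟩ : ∃ J : Finset ι, a ∉ J ∧ b ∈ J ∧ r J + l < ∑ j ∈ J, m j := by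
          simpa using Nat.find_min hex hl
        exact ⟨J, hJ⟩⟩
  obtain ⟨m', hm'⟩ : ∃ m', m + Finsupp.single a k = m' + Finsupp.single b k :=
    ⟨m + Finsupp.single a k - Finsupp.single b k, (tsub_add_cancel_of_le
      ((Finsupp.single_le_iff.2 hkb).trans (le_add_of_nonneg_right zero_le))).symm⟩
  refine ⟨k, m', ⟨by rw [← degree_eq_of_add_single_eq hm', h.degree_eq], fun I => ?_⟩, hm'⟩
  have hsum := sum_add_ite_of_add_single_eq hm' I
  by_cases ha : a ∈ I <;> by_cases hb : b ∈ I <;>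
    simp only [ha, hb, if_true, if_false, add_zero] at hsum
  · have := hle (.inl ha)
    omega
  · rcases Nat.eq_zero_or_pos k with rfl | hpos
    · have := hle (.inl ha)
      omega
    obtain ⟨J, hJ⟩ := hmin (k - 1) (by omega)
    have hunion : ∑ j ∈ I ∪ J, m j ≤ r (I ∪ J) := hle (by simp [ha])
    have hinter : ∑ j ∈ I ∩ J, m j ≤ r (I ∩ J) := hle (by simp [hb])
    have hmodular := sum_union_inter (s₁ := I) (s₂ := J) (f := fun j => m j)
    have := hr I J
    omega
  · have := hk I ha hb
    omega
  · have := hle (I := I) (.inr hb)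
    omega

theorem isBasePoint_comp_compress_iff {m : ι →₀ ℕ} (hab : a ≠ b) (hr : IsSubmodular r)
    (hmono : Monotone r) (hC : ∀ I, r I ≤ r (UV.compress {a} {b} I)) :
    IsBasePoint (fun I => r (UV.compress {a} {b} I)) n m ↔
      ∃ m', IsBasePoint r n m' ∧ InSwapSegment a b m' m := by
  refine ⟨fun h => ?_, fun ⟨m', hm', hseg⟩ => hm'.of_inSwapSegment hC hseg⟩
  have hval {p p' : ι →₀ ℕ} {k : ℕ} (hp : p + Finsupp.single a k = p' + Finsupp.single b k) :
      p a + k = p' a ∧ p b = p' b + k := by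
    constructor
    · simpa [hab] using DFunLike.congr_fun hp a
    · simpa [hab] using DFunLike.congr_fun hp b
  rcases le_total (m b) (m a) with hm | hm
  · obtain ⟨k, m', hm', hmm'⟩ := h.exists_of_comp_compress hr hmono
    obtain ⟨hva, hvb⟩ := hval hmm'
    exact ⟨m', hm', k, by omega, hmm'⟩
  · obtain ⟨k, m', hm', hmm'⟩ := h.swapEntries_comp_compress.exists_of_comp_compress hr hmono
    obtain ⟨hva, hvb⟩ := hval hmm'
    obtain ⟨d, hd⟩ := Nat.exists_eq_add_of_le hm
    simp only [swapEntries_apply, Equiv.swap_apply_left, Equiv.swap_apply_right] at hva hvb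
    refine ⟨m', hm', k + d, by omega, ?_⟩
    rw [Finsupp.single_add, Finsupp.single_add, ← add_assoc, ← add_assoc, add_right_comm,
      ← swapEntries_add_single hd, add_right_comm, hmm']

end SubmodularFunction

section SortingOrder

variable {ι : Type*} [LinearOrder ι] {a b : ι} {α β γ : ι →₀ ℕ}

/-- One step of sorting: exchanging a pair of entries that violates weak decrease. -/
def SortStep (α β : ι →₀ ℕ) : Prop :=
  ∃ a b, a < b ∧ α a < α b ∧ β = swapEntries a b α

/-- Bruhat order on the rearrangements of a composition, with the weakly decreasing one as the
bottom element: `SortsTo α β` says `β ≤ α`. -/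
def SortsTo : (ι →₀ ℕ) → (ι →₀ ℕ) → Prop :=
  Relation.ReflTransGen SortStep

theorem SortsTo.refl (α : ι →₀ ℕ) : SortsTo α α :=
  Relation.ReflTransGen.refl

theorem SortsTo.trans (h : SortsTo α β) (h' : SortsTo β γ) : SortsTo α γ :=
  Relation.ReflTransGen.trans h h'

theorem SortsTo.step {c d : ι} (h : SortsTo α β) (hcd : c < d) (hβ : β c < β d) :
    SortsTo α (swapEntries c d β) :=
  Relation.ReflTransGen.tail h ⟨c, d, hcd, hβ, rfl⟩

theorem sortsTo_swapEntries (hab : a < b) (hα : α a ≤ α b) : SortsTo α (swapEntries a b α) := by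
  rcases hα.eq_or_lt with heq | hlt
  · rw [swapEntries_eq_self heq]
    exact .refl α
  · exact (SortsTo.refl α).step hab hlt

theorem swapEntries_sortsTo (hab : a < b) (hα : α b ≤ α a) : SortsTo (swapEntries a b α) α := by
  simpa using sortsTo_swapEntries (α := swapEntries a b α) hab (by simpa using hα)

theorem SortsTo.eq_of_antitone (h : SortsTo α β) (hα : Antitone α) : β = α := by
  induction h with
  | refl => rfl
  | tail _ hstep ih =>
    obtain ⟨c, d, hcd, hlt, -⟩ := hstep
    exact absurd (hα hcd.le) (by rw [← ih]; exact hlt.not_ge)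

theorem SortsTo.degree_eq (h : SortsTo α β) : β.degree = α.degree := by
  induction h with
  | refl => rfl
  | tail _ hstep ih =>
    obtain ⟨c, d, -, -, rfl⟩ := hstep
    rw [degree_swapEntries, ih]

theorem swapEntries_swapEntries_conj (a b c d : ι) (α : ι →₀ ℕ) :
    swapEntries a b (swapEntries c d α) =
      swapEntries (Equiv.swap a b c) (Equiv.swap a b d) (swapEntries a b α) := by
  ext j
  rw [swapEntries_apply, swapEntries_apply, swapEntries_apply, swapEntries_apply,
    Equiv.swap_apply_apply]
  simp

theorem swap_lt_swap_of_covBy (hab : a ⋖ b) {c d : ι} (hcd : c < d) (hne : ¬(c = a ∧ d = b)) :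
    Equiv.swap a b c < Equiv.swap a b d := by
  have hlt := hab.lt
  have hge := @CovBy.ge_of_gt _ _ _ _ d hab
  have hle := @CovBy.le_of_lt _ _ _ _ c hab
  simp only [Equiv.swap_apply_def]
  grind

theorem SortsTo.swapEntries_step (hab : a ⋖ b) {c d : ι} (h : SortsTo α (swapEntries a b β))
    (hcd : c < d) (hβ : β c < β d) (hne : ¬(c = a ∧ d = b)) :
    SortsTo α (swapEntries a b (swapEntries c d β)) := by
  rw [swapEntries_swapEntries_conj]
  exact h.step (swap_lt_swap_of_covBy hab hcd hne) (by simpa using hβ)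

theorem SortsTo.swapEntries_right (hab : a ⋖ b) (h : SortsTo α β) (hα : α a ≤ α b) :
    SortsTo α (swapEntries a b β) := by
  induction h with
  | refl => exact sortsTo_swapEntries hab.lt hα
  | tail h hstep ih =>
    obtain ⟨c, d, hcd, hlt, rfl⟩ := hstep
    by_cases hne : c = a ∧ d = b
    · obtain ⟨rfl, rfl⟩ := hne
      rwa [swapEntries_swapEntries]
    · exact ih.swapEntries_step hab hcd hlt hne

/-- The lifting property of Bruhat order. -/
theorem SortsTo.of_swapEntries_left (hab : a ⋖ b) (h : SortsTo (swapEntries a b γ) β) :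
    SortsTo γ β ∨ SortsTo γ (swapEntries a b β) := by
  induction h with
  | refl => exact .inr (by rw [swapEntries_swapEntries]; exact .refl γ)
  | tail h hstep ih =>
    obtain ⟨c, d, hcd, hlt, rfl⟩ := hstep
    rcases ih with ih | ih
    · exact .inl (ih.step hcd hlt)
    by_cases hne : c = a ∧ d = b
    · obtain ⟨rfl, rfl⟩ := hne
      exact .inl ih
    · exact .inr (ih.swapEntries_step hab hcd hlt hne)

end SortingOrder

section Crystal

variable {ι : Type*} {a b : ι} {S : Finset ι} {T : List (Finset ι)}

/-- The content of a tableau: how often each letter occurs in its columns. -/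
noncomputable def columnWeight (T : List (Finset ι)) : ι →₀ ℕ :=
  (T.map fun S => Finsupp.indicator S fun _ _ => 1).sum

@[simp] theorem columnWeight_cons (S : Finset ι) (T : List (Finset ι)) :
    columnWeight (S :: T) = Finsupp.indicator S (fun _ _ => 1) + columnWeight T := by
  simp [columnWeight]

variable [DecidableEq ι]

/-- The crystal statistic `ε` on a tableau, given as its list of columns: the number of `b`s left
after bracketing each column with `a` but not `b` against the nearest unpaired later column with
`b` but not `a`. -/
def raiseDepth (a b : ι) : List (Finset ι) → ℕ
  | [] => 0
  | S :: T => if a ∈ S ∧ b ∉ S then raiseDepth a b T - 1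
      else if b ∈ S ∧ a ∉ S then raiseDepth a b T + 1 else raiseDepth a b T

/-- The crystal statistic `φ`: the number of columns with `a` but not `b` that are left unpaired
by the bracketing of `raiseDepth`. -/
def lowerDepth (a b : ι) : List (Finset ι) → ℕ
  | [] => 0
  | S :: T => if (a ∈ S ∧ b ∉ S) ∧ raiseDepth a b T = 0 then lowerDepth a b T + 1
      else lowerDepth a b T

/-- The crystal operator `f̃`, replacing `a` by `b` in the first unpaired column. It is total:
it fixes `T` when `lowerDepth a b T = 0`. -/
def crystalLower (a b : ι) : List (Finset ι) → List (Finset ι)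
  | [] => []
  | S :: T => if (a ∈ S ∧ b ∉ S) ∧ raiseDepth a b T = 0 then swapLetters a b S :: T
      else S :: crystalLower a b T

/-- The crystal operator `ẽ`, replacing `b` by `a` in the last unpaired column. It is total, but
meaningful only when `0 < raiseDepth a b T`. -/
def crystalRaise (a b : ι) : List (Finset ι) → List (Finset ι)
  | [] => []
  | S :: T => if (b ∈ S ∧ a ∉ S) ∧ raiseDepth a b T = 0 then swapLetters a b S :: T
      else S :: crystalRaise a b T

theorem indicator_swapLetters_add_single (ha : a ∈ S) (hb : b ∉ S) :
    (Finsupp.indicator (swapLetters a b S) fun _ _ => 1) + Finsupp.single a 1 =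
      (Finsupp.indicator S fun _ _ => 1) + Finsupp.single b 1 := by
  have h := swapEntries_add_single (a := b) (b := a) (n := 1)
    (m := Finsupp.indicator S fun _ _ => 1) (by simp [ha, hb])
  rw [← h, swapEntries_comm]
  congr 1
  ext j
  simp [Finsupp.indicator_apply]

theorem lowerDepth_add_columnWeight (a b : ι) (T : List (Finset ι)) :
    lowerDepth a b T + columnWeight T b = raiseDepth a b T + columnWeight T a := by
  induction T with
  | nil => rfl
  | cons S T ih =>
    simp only [lowerDepth, raiseDepth, columnWeight_cons, Finsupp.add_apply,
      Finsupp.indicator_apply]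
    split_ifs <;> grind

theorem raiseDepth_crystalLower (h : 0 < lowerDepth a b T) :
    raiseDepth a b (crystalLower a b T) = raiseDepth a b T + 1 := by
  induction T with
  | nil => simp [lowerDepth] at h
  | cons S T ih =>
    simp only [lowerDepth, crystalLower] at h ⊢
    split_ifs at h ⊢ with hc
    · simp [raiseDepth, hc]
    · simp only [raiseDepth, ih h]
      split_ifs <;> grind

theorem crystalRaise_crystalLower (h : 0 < lowerDepth a b T) :
    crystalRaise a b (crystalLower a b T) = T := by
  induction T with
  | nil => rfl
  | cons S T ih =>
    simp only [lowerDepth, crystalLower] at h ⊢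
    split_ifs at h ⊢ with hc
    · simp [crystalRaise, hc]
    · rw [crystalRaise, raiseDepth_crystalLower h, if_neg (by simp), ih h]

theorem columnWeight_crystalLower (h : 0 < lowerDepth a b T) :
    columnWeight (crystalLower a b T) + Finsupp.single a 1 =
      columnWeight T + Finsupp.single b 1 := by
  induction T with
  | nil => simp [lowerDepth] at h
  | cons S T ih =>
    simp only [lowerDepth, crystalLower] at h ⊢
    split_ifs at h ⊢ with hc
    · rw [columnWeight_cons, columnWeight_cons, add_right_comm,
        indicator_swapLetters_add_single hc.1.1 hc.1.2, add_right_comm]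
    · rw [columnWeight_cons, columnWeight_cons, add_assoc, ih h, add_assoc]

theorem lowerDepth_crystalLower (hab : a ≠ b) (h : 0 < lowerDepth a b T) :
    lowerDepth a b (crystalLower a b T) + 1 = lowerDepth a b T := by
  have hT := lowerDepth_add_columnWeight a b T
  have hfT := lowerDepth_add_columnWeight a b (crystalLower a b T)
  have hε := raiseDepth_crystalLower h
  have ha : columnWeight (crystalLower a b T) a + 1 = columnWeight T a := by
    simpa [hab] using DFunLike.congr_fun (columnWeight_crystalLower h) a
  have hb : columnWeight (crystalLower a b T) b = columnWeight T b + 1 := by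
    simpa [hab] using DFunLike.congr_fun (columnWeight_crystalLower h) b
  omega

theorem raiseDepth_pos_of_cons (h : 0 < raiseDepth a b (S :: T))
    (hS : ¬((b ∈ S ∧ a ∉ S) ∧ raiseDepth a b T = 0)) : 0 < raiseDepth a b T := by
  simp only [raiseDepth] at h
  split_ifs at h <;> grind

theorem raiseDepth_crystalRaise (h : 0 < raiseDepth a b T) :
    raiseDepth a b (crystalRaise a b T) + 1 = raiseDepth a b T := by
  induction T with
  | nil => simp [raiseDepth] at h
  | cons S T ih =>
    simp only [crystalRaise]
    split_ifs with hc
    · simp [raiseDepth, hc]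
    · simp only [raiseDepth] at h ⊢
      split_ifs at h ⊢ <;> grind

theorem crystalLower_crystalRaise (h : 0 < raiseDepth a b T) :
    crystalLower a b (crystalRaise a b T) = T := by
  induction T with
  | nil => rfl
  | cons S T ih =>
    simp only [crystalRaise]
    split_ifs with hc
    · simp [crystalLower, hc]
    · have hT := raiseDepth_pos_of_cons h hc
      have hε := raiseDepth_crystalRaise hT
      rw [crystalLower, if_neg, ih hT]
      rintro ⟨hS, h₀⟩
      simp only [raiseDepth, if_pos hS] at h
      omega

theorem lowerDepth_crystalRaise (h : 0 < raiseDepth a b T) :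
    lowerDepth a b (crystalRaise a b T) = lowerDepth a b T + 1 := by
  induction T with
  | nil => simp [raiseDepth] at h
  | cons S T ih =>
    simp only [crystalRaise]
    split_ifs with hc
    · simp [lowerDepth, hc]
    · have hT := raiseDepth_pos_of_cons h hc
      have hε := raiseDepth_crystalRaise hT
      simp only [lowerDepth, raiseDepth, ih hT] at h ⊢
      split_ifs at h ⊢ <;> grind

theorem raiseDepth_crystalLower_iterate (hab : a ≠ b) {k : ℕ} (h : k ≤ lowerDepth a b T) :
    raiseDepth a b ((crystalLower a b)^[k] T) = raiseDepth a b T + k := by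
  induction k generalizing T with
  | zero => rfl
  | succ k ih =>
    have hφ := lowerDepth_crystalLower hab (by omega : 0 < lowerDepth a b T)
    rw [Function.iterate_succ_apply, ih (by omega), raiseDepth_crystalLower (by omega)]
    omega

theorem lowerDepth_crystalLower_iterate (hab : a ≠ b) {k : ℕ} (h : k ≤ lowerDepth a b T) :
    lowerDepth a b ((crystalLower a b)^[k] T) + k = lowerDepth a b T := by
  induction k generalizing T with
  | zero => rfl
  | succ k ih =>
    have hφ := lowerDepth_crystalLower hab (by omega : 0 < lowerDepth a b T)
    have := ih (T := crystalLower a b T) (by omega)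
    rw [Function.iterate_succ_apply]
    omega

theorem columnWeight_crystalLower_iterate (hab : a ≠ b) {k : ℕ} (h : k ≤ lowerDepth a b T) :
    columnWeight ((crystalLower a b)^[k] T) + Finsupp.single a k =
      columnWeight T + Finsupp.single b k := by
  induction k generalizing T with
  | zero => simp
  | succ k ih =>
    have hφ := lowerDepth_crystalLower hab (by omega : 0 < lowerDepth a b T)
    rw [Function.iterate_succ_apply, Finsupp.single_add, Finsupp.single_add, ← add_assoc,
      ih (by omega), add_right_comm, columnWeight_crystalLower (by omega), add_right_comm,
      add_assoc]

theorem crystalRaise_iterate_crystalLower_iterate (hab : a ≠ b) {k : ℕ}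
    (h : k ≤ lowerDepth a b T) :
    (crystalRaise a b)^[k] ((crystalLower a b)^[k] T) = T := by
  induction k generalizing T with
  | zero => rfl
  | succ k ih =>
    have hφ := lowerDepth_crystalLower hab (by omega : 0 < lowerDepth a b T)
    rw [Function.iterate_succ_apply (crystalLower a b), Function.iterate_succ_apply',
      ih (by omega), crystalRaise_crystalLower (by omega)]

theorem raiseDepth_crystalRaise_iterate {k : ℕ} (h : k ≤ raiseDepth a b T) :
    raiseDepth a b ((crystalRaise a b)^[k] T) + k = raiseDepth a b T := by
  induction k generalizing T with
  | zero => rfl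
  | succ k ih =>
    have hε := raiseDepth_crystalRaise (by omega : 0 < raiseDepth a b T)
    have := ih (T := crystalRaise a b T) (by omega)
    rw [Function.iterate_succ_apply]
    omega

theorem lowerDepth_crystalRaise_iterate {k : ℕ} (h : k ≤ raiseDepth a b T) :
    lowerDepth a b ((crystalRaise a b)^[k] T) = lowerDepth a b T + k := by
  induction k generalizing T with
  | zero => rfl
  | succ k ih =>
    have hε := raiseDepth_crystalRaise (by omega : 0 < raiseDepth a b T)
    rw [Function.iterate_succ_apply, ih (by omega), lowerDepth_crystalRaise (by omega)]
    omega

theorem crystalLower_iterate_crystalRaise_iterate {k : ℕ} (h : k ≤ raiseDepth a b T) :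
    (crystalLower a b)^[k] ((crystalRaise a b)^[k] T) = T := by
  induction k generalizing T with
  | zero => rfl
  | succ k ih =>
    have hε := raiseDepth_crystalRaise (by omega : 0 < raiseDepth a b T)
    rw [Function.iterate_succ_apply (crystalRaise a b), Function.iterate_succ_apply',
      ih (by omega), crystalLower_crystalRaise (by omega)]

theorem columnWeight_crystalRaise_iterate (hab : a ≠ b) {k : ℕ} (h : k ≤ raiseDepth a b T) :
    columnWeight ((crystalRaise a b)^[k] T) + Finsupp.single b k =
      columnWeight T + Finsupp.single a k := by
  have := columnWeight_crystalLower_iterate hab (T := (crystalRaise a b)^[k] T)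
    ((Nat.le_add_left _ _).trans (lowerDepth_crystalRaise_iterate h).ge)
  rw [crystalLower_iterate_crystalRaise_iterate h] at this
  exact this.symm

/-- The reflection of the `a`-`b`-string of `T` after its top `δ` elements are removed: it
exchanges `raiseDepth - δ` with `lowerDepth`. By truncated subtraction at most one of the two
iterates is nontrivial. -/
def reflectString (a b : ι) (δ : ℕ) (T : List (Finset ι)) : List (Finset ι) :=
  (crystalRaise a b)^[raiseDepth a b T - (lowerDepth a b T + δ)]
    ((crystalLower a b)^[lowerDepth a b T + δ - raiseDepth a b T] T)

theorem reflectString_of_le {δ : ℕ} (h : raiseDepth a b T ≤ lowerDepth a b T + δ) :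
    reflectString a b δ T =
      (crystalLower a b)^[lowerDepth a b T + δ - raiseDepth a b T] T := by
  rw [reflectString, Nat.sub_eq_zero_of_le h, Function.iterate_zero_apply]

theorem reflectString_of_ge {δ : ℕ} (h : lowerDepth a b T + δ ≤ raiseDepth a b T) :
    reflectString a b δ T =
      (crystalRaise a b)^[raiseDepth a b T - (lowerDepth a b T + δ)] T := by
  rw [reflectString, Nat.sub_eq_zero_of_le h, Function.iterate_zero_apply]

theorem raiseDepth_reflectString (hab : a ≠ b) {δ : ℕ} (h : δ ≤ raiseDepth a b T) :
    raiseDepth a b (reflectString a b δ T) = lowerDepth a b T + δ := by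
  rcases le_total (raiseDepth a b T) (lowerDepth a b T + δ) with hle | hle
  · rw [reflectString_of_le hle, raiseDepth_crystalLower_iterate hab (by omega)]
    omega
  · have := raiseDepth_crystalRaise_iterate (Nat.sub_le (raiseDepth a b T) (lowerDepth a b T + δ))
    rw [reflectString_of_ge hle]
    omega

theorem lowerDepth_reflectString (hab : a ≠ b) {δ : ℕ} (h : δ ≤ raiseDepth a b T) :
    lowerDepth a b (reflectString a b δ T) + δ = raiseDepth a b T := by
  rcases le_total (raiseDepth a b T) (lowerDepth a b T + δ) with hle | hle
  · have := lowerDepth_crystalLower_iterate hab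
      (by omega : lowerDepth a b T + δ - raiseDepth a b T ≤ lowerDepth a b T)
    rw [reflectString_of_le hle]
    omega
  · rw [reflectString_of_ge hle, lowerDepth_crystalRaise_iterate (Nat.sub_le _ _)]
    omega

theorem reflectString_reflectString (hab : a ≠ b) {δ : ℕ} (h : δ ≤ raiseDepth a b T) :
    reflectString a b δ (reflectString a b δ T) = T := by
  have hε := raiseDepth_reflectString hab h
  have hφ := lowerDepth_reflectString hab h
  rcases le_total (raiseDepth a b T) (lowerDepth a b T + δ) with hle | hle
  · rw [reflectString_of_ge (by omega), hε, hφ, reflectString_of_le hle,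
      crystalRaise_iterate_crystalLower_iterate hab (by omega)]
  · rw [reflectString_of_le (by omega), hε, hφ, reflectString_of_ge hle,
      crystalLower_iterate_crystalRaise_iterate (Nat.sub_le _ _)]

theorem single_add_columnWeight_reflectString (hab : a ≠ b) {δ : ℕ} (h : δ ≤ raiseDepth a b T) :
    Finsupp.single a δ + columnWeight (reflectString a b δ T) =
      swapEntries a b (Finsupp.single a δ + columnWeight T) := by
  have hwt := lowerDepth_add_columnWeight a b T
  rcases le_total (raiseDepth a b T) (lowerDepth a b T + δ) with hle | hle
  · rw [reflectString_of_le hle]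
    refine add_right_cancel (b := Finsupp.single a (lowerDepth a b T + δ - raiseDepth a b T)) ?_
    rw [add_assoc, columnWeight_crystalLower_iterate hab (by omega), swapEntries_comm,
      swapEntries_add_single (by simp [hab]; omega), add_assoc]
  · rw [reflectString_of_ge hle]
    refine add_right_cancel (b := Finsupp.single b (raiseDepth a b T - (lowerDepth a b T + δ))) ?_
    rw [add_assoc, columnWeight_crystalRaise_iterate hab (Nat.sub_le _ _),
      swapEntries_add_single (by simp [hab]; omega), add_assoc]

end Crystal

section Demazure

variable {ι : Type*}

/-- The composition left after deleting one box from every nonempty row of `σ`. -/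
noncomputable def removeColumn (σ : ι →₀ ℕ) : ι →₀ ℕ :=
  σ.mapRange (· - 1) rfl

@[simp] theorem removeColumn_apply (σ : ι →₀ ℕ) (j : ι) : removeColumn σ j = σ j - 1 :=
  rfl

theorem indicator_support_add_removeColumn (σ : ι →₀ ℕ) :
    (Finsupp.indicator σ.support fun _ _ => 1) + removeColumn σ = σ := by
  classical
  ext j
  simp only [Finsupp.add_apply, Finsupp.indicator_apply, Finsupp.mem_support_iff,
    removeColumn_apply]
  split_ifs <;> omega

theorem removeColumn_swapEntries [DecidableEq ι] (a b : ι) (σ : ι →₀ ℕ) :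
    removeColumn (swapEntries a b σ) = swapEntries a b (removeColumn σ) := by
  ext j; simp

theorem degree_removeColumn_lt {σ : ι →₀ ℕ} (hσ : σ ≠ 0) :
    (removeColumn σ).degree < σ.degree := by
  have h := congrArg Finsupp.degree (indicator_support_add_removeColumn σ)
  have hpos : (Finsupp.indicator σ.support fun _ _ => 1).degree ≠ 0 := by
    obtain ⟨j, hj⟩ := Finsupp.ne_iff.1 hσ
    rw [Ne, Finsupp.degree_eq_zero_iff]
    intro h0
    have := DFunLike.congr_fun h0 j
    rw [Finsupp.indicator_of_mem (Finsupp.mem_support_iff.2 hj)] at this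
    exact one_ne_zero this
  rw [map_add] at h
  omega

variable [LinearOrder ι] {a b : ι} {σ τ γ m : ι →₀ ℕ} {T : List (Finset ι)}

/-- The Demazure crystal of `τ`, whose character is the key polynomial of `τ`, as a set of tableaux
given by their columns: the first column consists of the nonempty rows of some `σ ≤ τ` in Bruhat
order, and the remaining columns lie in the Demazure crystal of `σ` without its first column. -/
inductive IsDemazure : (ι →₀ ℕ) → List (Finset ι) → Prop
  | nil : IsDemazure 0 []
  | cons {σ τ : ι →₀ ℕ} {T : List (Finset ι)} (h : SortsTo τ σ) (hσ : σ ≠ 0)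
      (hT : IsDemazure (removeColumn σ) T) : IsDemazure τ (σ.support :: T)

theorem IsDemazure.mono (hT : IsDemazure σ T) (h : SortsTo τ σ) : IsDemazure τ T := by
  cases hT with
  | nil =>
    have h0 : τ = 0 := by
      rw [← Finsupp.degree_eq_zero_iff, ← h.degree_eq, map_zero]
    exact h0 ▸ .nil
  | cons h' hσ hT => exact .cons (h.trans h') hσ hT

theorem IsDemazure.cons_swapLetters (h : SortsTo τ (swapEntries a b σ)) (hσ : σ ≠ 0)
    (hT : IsDemazure (swapEntries a b (removeColumn σ)) T) :
    IsDemazure τ (swapLetters a b σ.support :: T) := by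
  rw [← support_swapEntries]
  rw [← removeColumn_swapEntries] at hT
  exact .cons h (swapEntries_ne_zero hσ) hT

theorem IsDemazure.swapEntries_of_raiseDepth_eq_zero (hab : a ⋖ b) (hT : IsDemazure τ T)
    (hε : raiseDepth a b T = 0) : IsDemazure (swapEntries a b τ) T := by
  induction hT with
  | nil => simpa using IsDemazure.nil
  | @cons σ τ T h hσ hT ih =>
    rw [← swapEntries_swapEntries a b τ] at h
    rcases h.of_swapEntries_left hab with h | h
    · exact .cons h hσ hT
    rcases le_or_gt (σ b) (σ a) with hle | hlt
    · exact .cons (h.trans (swapEntries_sortsTo hab.lt hle)) hσ hT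
    have hbS : b ∈ σ.support := Finsupp.mem_support_iff.2 (by omega)
    have haS : a ∈ σ.support := by
      by_contra haS
      simp [raiseDepth, hbS, haS] at hε
    rw [← swapLetters_eq_self (iff_of_true haS hbS)]
    exact .cons_swapLetters h hσ (ih (by simpa [raiseDepth, haS, hbS] using hε))

theorem isDemazure_swapEntries_iff_of_raiseDepth_eq_zero (hab : a ⋖ b)
    (hε : raiseDepth a b T = 0) : IsDemazure (swapEntries a b τ) T ↔ IsDemazure τ T :=
  ⟨fun hT => by simpa using hT.swapEntries_of_raiseDepth_eq_zero hab hε,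
    fun hT => hT.swapEntries_of_raiseDepth_eq_zero hab hε⟩

theorem IsDemazure.raise (hab : a ⋖ b) (hT : IsDemazure τ T)
    (hε : 0 < raiseDepth a b T) : IsDemazure τ (crystalRaise a b T) := by
  induction hT with
  | nil => exact .nil
  | @cons σ τ T h hσ hT ih =>
    rw [crystalRaise]
    split_ifs with hc
    · have ha : σ a = 0 := Finsupp.notMem_support_iff.1 hc.1.2
      exact .cons_swapLetters (h.trans (sortsTo_swapEntries hab.lt (by omega))) hσ
        (hT.swapEntries_of_raiseDepth_eq_zero hab hc.2)
    · exact .cons h hσ (ih (raiseDepth_pos_of_cons hε hc))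

theorem IsDemazure.lower (hab : a ⋖ b) (hT : IsDemazure τ T)
    (hφ : 0 < lowerDepth a b T) (hτ : τ a ≤ τ b ∨ 0 < raiseDepth a b T) :
    IsDemazure τ (crystalLower a b T) := by
  induction T generalizing τ with
  | nil => exact hT
  | cons S T ih =>
    obtain _ | @⟨σ, _, _, h, hσ, hT⟩ := hT
    have hswap (hle : σ b ≤ σ a) : IsDemazure (swapEntries a b (removeColumn σ)) T :=
      hT.mono (swapEntries_sortsTo hab.lt (by simp only [removeColumn_apply]; omega))
    rw [crystalLower]
    simp only [lowerDepth, raiseDepth] at hφ hτ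
    split_ifs with hc
    · have hb : σ b = 0 := Finsupp.notMem_support_iff.1 hc.1.2
      have hτ' : τ a ≤ τ b := hτ.resolve_right (by simp [hc])
      exact .cons_swapLetters (h.swapEntries_right hab hτ') hσ (hswap (by omega))
    rw [if_neg hc] at hφ
    rcases le_or_gt (σ a) (σ b) with hle | hlt
    · exact .cons h hσ (ih hT hφ (.inl (by simp only [removeColumn_apply]; omega)))
    by_cases hε : 0 < raiseDepth a b T
    · exact .cons h hσ (ih hT hφ (.inr hε))
    have haS : a ∈ σ.support := Finsupp.mem_support_iff.2 (by omega)
    have hbS : b ∈ σ.support := by grind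
    have hτ' : τ a ≤ τ b := hτ.resolve_right (by simp [haS, hbS, hε])
    rw [← swapLetters_eq_self (iff_of_true haS hbS)]
    refine .cons_swapLetters (h.swapEntries_right hab hτ') hσ (ih (hswap hlt.le) hφ (.inl ?_))
    simp only [swapEntries_apply, Equiv.swap_apply_left, Equiv.swap_apply_right,
      removeColumn_apply]
    omega

theorem IsDemazure.raise_iterate (hab : a ⋖ b) (hT : IsDemazure τ T) {k : ℕ}
    (hk : k ≤ raiseDepth a b T) : IsDemazure τ ((crystalRaise a b)^[k] T) := by
  induction k with
  | zero => exact hT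
  | succ k ih =>
    have hε := raiseDepth_crystalRaise_iterate (by omega : k ≤ raiseDepth a b T)
    rw [Function.iterate_succ_apply']
    exact (ih (by omega)).raise hab (by omega)

theorem IsDemazure.lower_iterate (hab : a ⋖ b) (hT : IsDemazure τ T) {k : ℕ}
    (hk : k ≤ lowerDepth a b T) (hτ : τ a ≤ τ b ∨ 0 < raiseDepth a b T) :
    IsDemazure τ ((crystalLower a b)^[k] T) := by
  induction k with
  | zero => exact hT
  | succ k ih =>
    have hε := raiseDepth_crystalLower_iterate hab.ne (by omega : k ≤ lowerDepth a b T)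
    have hφ := lowerDepth_crystalLower_iterate hab.ne (by omega : k ≤ lowerDepth a b T)
    rw [Function.iterate_succ_apply']
    exact (ih (by omega)).lower hab (by omega) (by omega)

theorem IsDemazure.reflectString (hab : a ⋖ b) (hT : IsDemazure τ T) {δ : ℕ}
    (hδ : δ ≤ raiseDepth a b T) (hτ : τ a ≤ τ b ∨ 0 < raiseDepth a b T) :
    IsDemazure τ (reflectString a b δ T) := by
  rcases le_total (raiseDepth a b T) (lowerDepth a b T + δ) with hle | hle
  · rw [reflectString_of_le hle]
    exact hT.lower_iterate hab (by omega) hτ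
  · rw [reflectString_of_ge hle]
    exact hT.raise_iterate hab (Nat.sub_le _ _)

theorem exists_isDemazure_swapEntries_iff (hab : a ⋖ b) (hγ : γ b ≤ γ a) :
    (∃ T, IsDemazure (swapEntries a b γ) T ∧ columnWeight T = m) ↔
      ∃ m', (∃ T, IsDemazure γ T ∧ columnWeight T = m') ∧ InSwapSegment a b m' m := by
  constructor
  · rintro ⟨T, hT, rfl⟩
    set T' := (crystalRaise a b)^[raiseDepth a b T] T
    have hε : raiseDepth a b T' = 0 := by
      simpa using raiseDepth_crystalRaise_iterate (le_refl (raiseDepth a b T))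
    have hφ : lowerDepth a b T' = lowerDepth a b T + raiseDepth a b T :=
      lowerDepth_crystalRaise_iterate le_rfl
    have hwt := lowerDepth_add_columnWeight a b T'
    have hmem : IsDemazure γ T' := (isDemazure_swapEntries_iff_of_raiseDepth_eq_zero hab hε).1
      (hT.raise_iterate hab le_rfl)
    exact ⟨_, ⟨T', hmem, rfl⟩, raiseDepth a b T, by omega,
      (columnWeight_crystalRaise_iterate hab.ne le_rfl).symm⟩
  · rintro ⟨_, ⟨T, hT, rfl⟩, k, hk, hm⟩
    have hwt := lowerDepth_add_columnWeight a b T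
    have hle : k ≤ lowerDepth a b T := by omega
    have hmem : IsDemazure (swapEntries a b γ) T := hT.mono (swapEntries_sortsTo hab.lt hγ)
    refine ⟨_, hmem.lower_iterate hab hle (.inl (by simpa using hγ)), ?_⟩
    exact add_right_cancel ((columnWeight_crystalLower_iterate hab.ne hle).trans hm.symm)

theorem exists_isDemazure_iff_eq_of_antitone (hσ : Antitone σ) :
    ∃ T, columnWeight T = σ ∧ ∀ U, IsDemazure σ U ↔ U = T := by
  induction hn : σ.degree using Nat.strong_induction_on generalizing σ with
  | _ n ih =>
  obtain rfl | h0 := eq_or_ne σ 0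
  · refine ⟨[], rfl, fun U => ⟨fun hU => ?_, fun hU => hU ▸ .nil⟩⟩
    obtain _ | ⟨h, h0, -⟩ := hU
    · rfl
    · exact absurd (h.eq_of_antitone hσ) h0
  · obtain ⟨T, hT, hU⟩ := ih _ (hn ▸ degree_removeColumn_lt h0) (σ := removeColumn σ)
      (fun j k hjk => Nat.sub_le_sub_right (hσ hjk) 1) rfl
    refine ⟨σ.support :: T, ?_, fun U => ⟨fun h => ?_, fun h => ?_⟩⟩
    · rw [columnWeight_cons, hT, indicator_support_add_removeColumn]
    · obtain _ | ⟨h, -, hT'⟩ := h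
      · exact absurd rfl h0
      · obtain rfl := h.eq_of_antitone hσ
        rw [(hU _).1 hT']
    · exact h ▸ .cons (.refl σ) h0 ((hU T).2 rfl)

end Demazure

section Finiteness

theorem swapEntries_induction {P : (ℕ →₀ ℕ) → Prop} (base : ∀ α : ℕ →₀ ℕ, Antitone α → P α)
    (step : ∀ (γ : ℕ →₀ ℕ) (i : ℕ), γ (i + 1) < γ i → P γ → P (swapEntries i (i + 1) γ))
    (α : ℕ →₀ ℕ) : P α := by
  induction hn : Finsupp.weight (fun j : ℕ => j) α using Nat.strong_induction_on
    generalizing α with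
  | _ n ih =>
  by_cases hα : ∀ i, α (i + 1) ≤ α i
  · exact base α (antitone_nat_of_succ_le hα)
  push Not at hα
  obtain ⟨i, hi⟩ := hα
  obtain ⟨d, hd⟩ := Nat.exists_eq_add_of_lt hi
  rw [← swapEntries_swapEntries i (i + 1) α]
  refine step _ i (by simpa using hi) (ih _ ?_ _ rfl)
  have hw := congrArg (Finsupp.weight fun j : ℕ => j)
    (swapEntries_add_single (n := d + 1) (by omega : α (i + 1) = α i + (d + 1)))
  simp only [map_add, Finsupp.weight_single, smul_eq_mul, mul_add, mul_one] at hw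
  omega

theorem finite_sortsTo (α : ℕ →₀ ℕ) : {β | SortsTo α β}.Finite := by
  induction α using swapEntries_induction with
  | base α hα => exact (Set.finite_singleton α).subset fun β hβ => hβ.eq_of_antitone hα
  | step γ i _ ih =>
    refine (ih.union (ih.image (swapEntries i (i + 1)))).subset fun β hβ => ?_
    exact (SortsTo.of_swapEntries_left (Order.covBy_add_one i) hβ).imp_right
      fun h => ⟨_, h, swapEntries_swapEntries _ _ _⟩

theorem finite_isDemazure (α : ℕ →₀ ℕ) : {T | IsDemazure α T}.Finite := by
  induction hn : α.degree using Nat.strong_induction_on generalizing α with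
  | _ n ih =>
  have hcons : (⋃ σ ∈ {σ | SortsTo α σ ∧ σ ≠ 0},
      (σ.support :: ·) '' {T | IsDemazure (removeColumn σ) T}).Finite := by
    refine ((finite_sortsTo α).subset fun σ h => h.1).biUnion fun σ ⟨h, hσ⟩ => ?_
    exact (ih _ (by rw [← hn, ← h.degree_eq]; exact degree_removeColumn_lt hσ) _ rfl).image _
  refine ((Set.finite_singleton []).union hcons).subset fun T hT => ?_
  obtain _ | @⟨σ, _, T, h, hσ, hT⟩ := hT
  · exact .inl rfl
  · exact .inr (Set.mem_biUnion (⟨h, hσ⟩ : SortsTo α σ ∧ σ ≠ 0) ⟨T, hT, rfl⟩)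

/-- The Demazure crystal of `α` as a finite set of tableaux. -/
noncomputable def demazureTableaux (α : ℕ →₀ ℕ) : Finset (List (Finset ℕ)) :=
  (finite_isDemazure α).toFinset

theorem mem_demazureTableaux {α : ℕ →₀ ℕ} {T : List (Finset ℕ)} :
    T ∈ demazureTableaux α ↔ IsDemazure α T :=
  (finite_isDemazure α).mem_toFinset

end Finiteness

section Character

variable {ι : Type*} {D : Finset (List (Finset ι))}

/-- The generating function of a finite set of tableaux by content. -/
noncomputable def tableauCharacter (D : Finset (List (Finset ι))) : MvPolynomial ι ℤ :=
  ∑ T ∈ D, monomial (columnWeight T) 1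

theorem mem_support_tableauCharacter {m : ι →₀ ℕ} :
    m ∈ (tableauCharacter D).support ↔ ∃ T ∈ D, columnWeight T = m := by
  classical
  rw [tableauCharacter, mem_support_iff, coeff_sum]
  simp only [coeff_monomial, sum_boole, ne_eq, Nat.cast_eq_zero, card_eq_zero,
    filter_eq_empty_iff, not_forall, not_not, exists_prop]

theorem X_pow_mul_tableauCharacter (a : ι) (δ : ℕ) :
    X a ^ δ * tableauCharacter D =
      ∑ T ∈ D, monomial (Finsupp.single a δ + columnWeight T) 1 := by
  simp [tableauCharacter, X_pow_eq_monomial, mul_sum]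

variable [DecidableEq ι] {a b : ι}

theorem rename_X_pow_mul_tableauCharacter (hab : a ≠ b) {δ : ℕ}
    (hδ : ∀ T ∈ D, δ ≤ raiseDepth a b T) (hD : ∀ T ∈ D, reflectString a b δ T ∈ D) :
    rename (Equiv.swap a b) (X a ^ δ * tableauCharacter D) = X a ^ δ * tableauCharacter D := by
  rw [X_pow_mul_tableauCharacter, map_sum]
  refine sum_nbij' (reflectString a b δ) (reflectString a b δ) hD hD
    (fun T hT => reflectString_reflectString hab (hδ T hT))
    (fun T hT => reflectString_reflectString hab (hδ T hT)) fun T hT => ?_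
  rw [single_add_columnWeight_reflectString hab (hδ T hT), swapEntries, rename_monomial,
    Finsupp.equivMapDomain_eq_mapDomain]

/-- The part of `D` with `0 < raiseDepth` contributes a symmetric summand to `X a` times the
character, because each truncated string in it is reflected onto itself. -/
theorem X_mul_sub_rename_eq_filter (hab : a ≠ b)
    (hD : ∀ T ∈ D, 0 < raiseDepth a b T → reflectString a b 1 T ∈ D) :
    X a * tableauCharacter D - rename (Equiv.swap a b) (X a * tableauCharacter D) =
      X a * tableauCharacter (D.filter (raiseDepth a b · = 0)) -
        rename (Equiv.swap a b) (X a * tableauCharacter (D.filter (raiseDepth a b · = 0))) := by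
  have hsplit : tableauCharacter D = tableauCharacter (D.filter (raiseDepth a b · = 0)) +
      tableauCharacter (D.filter (¬ raiseDepth a b · = 0)) :=
    (sum_filter_add_sum_filter_not D _ _).symm
  have hsymm : rename (Equiv.swap a b)
      (X a * tableauCharacter (D.filter (¬ raiseDepth a b · = 0))) =
        X a * tableauCharacter (D.filter (¬ raiseDepth a b · = 0)) := by
    rw [← pow_one (X a)]
    refine rename_X_pow_mul_tableauCharacter hab (fun T hT => ?_) fun T hT => ?_ <;>
      obtain ⟨hT, hε⟩ := mem_filter.1 hT
    · exact Nat.one_le_iff_ne_zero.2 hε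
    · refine mem_filter.2 ⟨hD T hT (Nat.pos_of_ne_zero hε), ?_⟩
      rw [raiseDepth_reflectString hab (Nat.one_le_iff_ne_zero.2 hε)]
      exact Nat.succ_ne_zero _
  rw [hsplit, mul_add, map_add, hsymm]
  ring

/-- The character of the Demazure crystal of `α`, which turns out to be the key polynomial. -/
noncomputable def demazureCharacter (α : ℕ →₀ ℕ) : MvPolynomial ℕ ℤ :=
  tableauCharacter (demazureTableaux α)

theorem mem_support_demazureCharacter {α m : ℕ →₀ ℕ} :
    m ∈ (demazureCharacter α).support ↔ ∃ T, IsDemazure α T ∧ columnWeight T = m := by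
  simp only [demazureCharacter, mem_support_tableauCharacter, mem_demazureTableaux]

theorem demazureCharacter_of_antitone {α : ℕ →₀ ℕ} (hα : Antitone α) :
    demazureCharacter α = monomial α 1 := by
  obtain ⟨T, hT, hU⟩ := exists_isDemazure_iff_eq_of_antitone hα
  have : demazureTableaux α = {T} := by ext U; simp [mem_demazureTableaux, hU]
  rw [demazureCharacter, this, tableauCharacter, sum_singleton, hT]

theorem X_sub_X_mul_demazureCharacter_swapEntries {γ : ℕ →₀ ℕ} {i : ℕ} (hγ : γ (i + 1) ≤ γ i) :
    (X i - X (i + 1)) * demazureCharacter (swapEntries i (i + 1) γ) =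
      X i * demazureCharacter γ - rename (Equiv.swap i (i + 1)) (X i * demazureCharacter γ) := by
  have hcov : i ⋖ i + 1 := Order.covBy_add_one i
  have hclosed (τ : ℕ →₀ ℕ) : ∀ T ∈ demazureTableaux τ,
      0 < raiseDepth i (i + 1) T →
        reflectString i (i + 1) 1 T ∈ demazureTableaux τ := by
    simp only [mem_demazureTableaux]
    exact fun T hT hε => hT.reflectString hcov hε (.inr hε)
  have hfilter : (demazureTableaux (swapEntries i (i + 1) γ)).filter
      (raiseDepth i (i + 1) · = 0) =
        (demazureTableaux γ).filter (raiseDepth i (i + 1) · = 0) := by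
    ext T
    simp only [mem_filter, mem_demazureTableaux, and_congr_left_iff]
    exact isDemazure_swapEntries_iff_of_raiseDepth_eq_zero hcov
  have hsymm : rename (Equiv.swap i (i + 1)) (demazureCharacter (swapEntries i (i + 1) γ)) =
      demazureCharacter (swapEntries i (i + 1) γ) := by
    have h := rename_X_pow_mul_tableauCharacter hcov.ne (δ := 0)
      (D := demazureTableaux (swapEntries i (i + 1) γ)) (fun _ _ => zero_le) (by
        simp only [mem_demazureTableaux]
        exact fun T hT => hT.reflectString hcov zero_le (.inl (by simpa using hγ)))
    rwa [pow_zero, one_mul] at h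
  calc (X i - X (i + 1)) * demazureCharacter (swapEntries i (i + 1) γ)
      = X i * demazureCharacter (swapEntries i (i + 1) γ) - rename (Equiv.swap i (i + 1))
          (X i * demazureCharacter (swapEntries i (i + 1) γ)) := by
        rw [map_mul, hsymm, rename_X, Equiv.swap_apply_left, sub_mul]
    _ = _ := by
        rw [demazureCharacter, X_mul_sub_rename_eq_filter hcov.ne (hclosed _), hfilter,
          demazureCharacter, X_mul_sub_rename_eq_filter hcov.ne (hclosed γ)]

theorem eq_demazureCharacter {K : (ℕ →₀ ℕ) → MvPolynomial ℕ ℤ}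
    (hbase : ∀ α : ℕ →₀ ℕ, Antitone α → K α = monomial α 1)
    (hrec : ∀ (α : ℕ →₀ ℕ) (i : ℕ), α i < α (i + 1) →
      (X i - X (i + 1)) * K α = X i * K (swapEntries i (i + 1) α) -
        rename (Equiv.swap i (i + 1)) (X i * K (swapEntries i (i + 1) α)))
    (α : ℕ →₀ ℕ) : K α = demazureCharacter α := by
  induction α using swapEntries_induction with
  | base α hα => rw [hbase α hα, demazureCharacter_of_antitone hα]
  | step γ i hγ ih =>
    have hX : (X i - X (i + 1) : MvPolynomial ℕ ℤ) ≠ 0 :=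
      sub_ne_zero.2 (X_injective.ne i.succ_ne_self.symm)
    refine mul_left_cancel₀ hX ?_
    rw [hrec _ i (by simpa using hγ), swapEntries_swapEntries, ih,
      X_sub_X_mul_demazureCharacter_swapEntries hγ.le]

end Character

section Rank

variable {α β γ m : ℕ →₀ ℕ} {i : ℕ} {I : Finset ℕ}

/-- The rank function of the Newton polytope of the key polynomial of `α`: the support function, on
indicator vectors, of the lower Bruhat interval of `α`. -/
noncomputable def sortRank (α : ℕ →₀ ℕ) (I : Finset ℕ) : ℕ :=
  (finite_sortsTo α).toFinset.sup fun β => ∑ j ∈ I, β j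

theorem sortRank_le_iff {n : ℕ} :
    sortRank α I ≤ n ↔ ∀ β, SortsTo α β → ∑ j ∈ I, β j ≤ n := by
  rw [sortRank, Finset.sup_le_iff]
  exact forall_congr' fun β => by rw [(finite_sortsTo α).mem_toFinset]; rfl

theorem SortsTo.sum_le_sortRank (h : SortsTo α β) (I : Finset ℕ) : ∑ j ∈ I, β j ≤ sortRank α I :=
  sortRank_le_iff.1 le_rfl β h

theorem monotone_sortRank (α : ℕ →₀ ℕ) : Monotone (sortRank α) := fun _ J hIJ =>
  sortRank_le_iff.2 fun _ hβ => (sum_le_sum_of_subset hIJ).trans (hβ.sum_le_sortRank J)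

theorem sortRank_of_antitone (hα : Antitone α) (I : Finset ℕ) :
    sortRank α I = ∑ j ∈ I, α j :=
  le_antisymm (sortRank_le_iff.2 fun _ hβ => by rw [hβ.eq_of_antitone hα])
    ((SortsTo.refl α).sum_le_sortRank I)

theorem sortRank_le_sortRank_compress (γ : ℕ →₀ ℕ) (i : ℕ) (I : Finset ℕ) :
    sortRank γ I ≤ sortRank γ (UV.compress {i} {i + 1} I) := by
  rw [compress_singleton]
  split_ifs with hI
  swap
  · rfl
  refine sortRank_le_iff.2 fun β hβ => ?_
  rcases le_or_gt (β (i + 1)) (β i) with hle | hlt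
  · refine le_trans ?_ (hβ.sum_le_sortRank _)
    rw [sum_swapLetters]
    refine sum_le_sum fun j hj => ?_
    obtain rfl | hj' := eq_or_ne j (i + 1)
    · simpa using hle
    · exact (swapEntries_apply_of_ne (ne_of_mem_of_not_mem hj hI.1) hj').ge
  · have h := (hβ.step i.lt_succ_self hlt).sum_le_sortRank (swapLetters i (i + 1) I)
    rwa [sum_swapLetters, swapEntries_swapEntries] at h

theorem sortRank_swapEntries (hγ : γ (i + 1) ≤ γ i) (I : Finset ℕ) :
    sortRank (swapEntries i (i + 1) γ) I = sortRank γ (UV.compress {i} {i + 1} I) := by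
  have hcov : i ⋖ i + 1 := Order.covBy_add_one i
  have hdown : SortsTo (swapEntries i (i + 1) γ) γ := swapEntries_sortsTo hcov.lt hγ
  refine le_antisymm (sortRank_le_iff.2 fun β hβ => ?_) (sortRank_le_iff.2 fun β hβ => ?_)
  · rcases hβ.of_swapEntries_left hcov with h | h
    · exact (h.sum_le_sortRank I).trans (sortRank_le_sortRank_compress γ i I)
    · rw [← swapEntries_swapEntries i (i + 1) β, ← sum_swapLetters, ← compress_swapLetters]
      exact (h.sum_le_sortRank _).trans (sortRank_le_sortRank_compress γ i _)
  · rw [compress_singleton]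
    split_ifs
    · rw [sum_swapLetters]
      exact ((hdown.trans hβ).swapEntries_right hcov (by simpa using hγ)).sum_le_sortRank I
    · exact (hdown.trans hβ).sum_le_sortRank I

theorem isSubmodular_sortRank (α : ℕ →₀ ℕ) : IsSubmodular (sortRank α) := by
  induction α using swapEntries_induction with
  | base α hα =>
    intro I J
    simp only [sortRank_of_antitone hα]
    exact sum_union_inter.le
  | step γ i hγ ih =>
    rw [funext (sortRank_swapEntries hγ.le)]
    exact ih.comp_compress (sortRank_le_sortRank_compress γ i)

theorem isBasePoint_sortRank_iff_eq_of_antitone (hα : Antitone α) :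
    IsBasePoint (sortRank α) α.degree m ↔ m = α := by
  rw [funext (sortRank_of_antitone hα)]
  exact isBasePoint_sum_iff

theorem exists_isDemazure_iff_isBasePoint (α m : ℕ →₀ ℕ) :
    (∃ T, IsDemazure α T ∧ columnWeight T = m) ↔ IsBasePoint (sortRank α) α.degree m := by
  induction α using swapEntries_induction generalizing m with
  | base α hα =>
    obtain ⟨T, hT, hU⟩ := exists_isDemazure_iff_eq_of_antitone hα
    simp only [isBasePoint_sortRank_iff_eq_of_antitone hα, hU, exists_eq_left, hT]
    exact eq_comm
  | step γ i hγ ih =>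
    have hcov : i ⋖ i + 1 := Order.covBy_add_one i
    rw [exists_isDemazure_swapEntries_iff hcov hγ.le, funext (sortRank_swapEntries hγ.le),
      degree_swapEntries, isBasePoint_comp_compress_iff hcov.ne (isSubmodular_sortRank γ)
        (monotone_sortRank γ) (sortRank_le_sortRank_compress γ i)]
    simp only [ih]

theorem mem_support_demazureCharacter_iff_isBasePoint :
    m ∈ (demazureCharacter α).support ↔ IsBasePoint (sortRank α) α.degree m :=
  mem_support_demazureCharacter.trans (exists_isDemazure_iff_isBasePoint α m)

end Rank

section NewtonPolytope

variable {f : MvPolynomial ℕ ℤ} {p : ℕ → ℝ}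

theorem sum_mem_of_mem_newtonPolytopeNat (hp : p ∈ newtonPolytopeNat f) {s : Set ℝ}
    (hs : Convex ℝ s) {I : Finset ℕ} (h : ∀ d ∈ f.support, ((∑ i ∈ I, d i : ℕ) : ℝ) ∈ s) :
    ∑ i ∈ I, p i ∈ s := by
  have hlin : IsLinearMap ℝ fun q : ℕ → ℝ => ∑ i ∈ I, q i :=
    ⟨fun _ _ => sum_add_distrib, fun _ _ => mul_sum _ _ _ |>.symm⟩
  refine convexHull_min ?_ (hs.is_linear_preimage hlin) hp
  rintro _ ⟨d, hd, rfl⟩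
  simpa using h d hd

theorem degree_eq_sum_of_support_subset {ι M : Type*} [AddCommMonoid M] {d : ι →₀ M}
    {U : Finset ι} (h : d.support ⊆ U) : d.degree = ∑ i ∈ U, d i :=
  sum_subset h fun _ _ => Finsupp.notMem_support_iff.1

theorem exists_isBasePoint_of_mem_newtonPolytopeNat {r : Finset ℕ → ℕ} {n : ℕ}
    (hf : ∀ d ∈ f.support, IsBasePoint r n d) (hp : p ∈ newtonPolytopeNat f)
    (hint : ∀ i, ∃ k : ℤ, p i = k) : ∃ d, IsBasePoint r n d ∧ p = fun i => (d i : ℝ) := by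
  have hnonneg (i : ℕ) : 0 ≤ p i := by
    simpa using sum_mem_of_mem_newtonPolytopeNat hp (convex_Ici 0) (I := {i})
      fun d _ => Set.mem_Ici.2 (Nat.cast_nonneg _)
  have hvars (i : ℕ) (hi : i ∉ f.vars) : p i = 0 := by
    have hd (d) (hd : d ∈ f.support) : d i = 0 := by
      by_contra h
      exact hi ((mem_vars_iff_mem_support _).2 ⟨d, hd, Finsupp.mem_support_iff.2 h⟩)
    simpa using sum_mem_of_mem_newtonPolytopeNat hp (convex_singleton (0 : ℝ)) (I := {i})
      fun d hd' => by simp [hd d hd']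
  have hdeg : ∑ i ∈ f.vars, p i = n :=
    sum_mem_of_mem_newtonPolytopeNat hp (convex_singleton (n : ℝ)) fun d hd => by
      rw [← degree_eq_sum_of_support_subset fun i hi => (mem_vars_iff_mem_support _).2 ⟨d, hd, hi⟩,
        (hf d hd).degree_eq, Set.mem_singleton_iff]
  have hsum (I : Finset ℕ) : ∑ i ∈ I, p i ≤ r I :=
    sum_mem_of_mem_newtonPolytopeNat hp (convex_Iic (r I : ℝ)) fun d hd =>
      Set.mem_Iic.2 (Nat.cast_le.2 ((hf d hd).sum_le I))
  obtain ⟨c, rfl⟩ : ∃ c : ℕ → ℕ, p = fun i => (c i : ℝ) := by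
    refine ⟨fun i => ⌊p i⌋₊, funext fun i => ?_⟩
    obtain ⟨k, hk⟩ := hint i
    lift k to ℕ using by exact_mod_cast hk ▸ hnonneg i
    simp [hk]
  let d := Finsupp.onFinset f.vars c fun i => by
    contrapose!
    exact fun hi => Nat.cast_eq_zero.1 (hvars i hi)
  refine ⟨d, ⟨?_, fun I => Nat.cast_le.1 ((Nat.cast_sum I c).trans_le (hsum I))⟩, rfl⟩
  rw [degree_eq_sum_of_support_subset Finsupp.support_onFinset_subset]
  exact Nat.cast_injective ((Nat.cast_sum f.vars c).trans hdeg)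

end NewtonPolytope

/-- Every key polynomial has saturated Newton polytope: every lattice point of
`Newton(κ_α)` is the exponent vector of a monomial with nonzero coefficient in `κ_α`. -/
theorem stmt12 (Key : (ℕ →₀ ℕ) → MvPolynomial ℕ ℤ)
    -- If `α` is weakly decreasing then `κ_α = x_1^{α_1} x_2^{α_2} ⋯` (variables are
    -- `0`-indexed: the variable `X i` is `x_{i+1}` and `α i` is `α_{i+1}`).
    (hbase : ∀ α : ℕ →₀ ℕ, (∀ i j : ℕ, i ≤ j → α j ≤ α i) → Key α = monomial α 1)
    -- If `α i < α (i+1)` then `κ_α = ∂_i (x_i κ_α̂)` where `α̂` swaps entries `i`, `i+1`: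
    -- `(xᵢ - xᵢ₊₁) ⬝ κ_α = xᵢ κ_α̂ - sᵢ ⬝ (xᵢ κ_α̂)`.
    (hrec : ∀ (α : ℕ →₀ ℕ) (i : ℕ), α i < α (i + 1) →
      (X i - X (i + 1)) * Key α =
        X i * Key (Finsupp.equivMapDomain (Equiv.swap i (i + 1)) α) -
          rename (Equiv.swap i (i + 1))
            (X i * Key (Finsupp.equivMapDomain (Equiv.swap i (i + 1)) α)))
    (α : ℕ →₀ ℕ) :
    ∀ p : ℕ → ℝ, p ∈ newtonPolytopeNat (Key α) → (∀ i, ∃ m : ℤ, p i = (m : ℝ)) →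
      ∃ d ∈ (Key α).support, p = fun i => ((d i : ℕ) : ℝ) := by
  obtain rfl : Key = demazureCharacter :=
    funext (eq_demazureCharacter (fun α hα => hbase α fun _ _ hij => hα hij) hrec)
  intro p hp hint
  obtain ⟨d, hd, rfl⟩ := exists_isBasePoint_of_mem_newtonPolytopeNat
    (fun d hd => mem_support_demazureCharacter_iff_isBasePoint.1 hd) hp hint
  exact ⟨d, mem_support_demazureCharacter_iff_isBasePoint.2 hd, rfl⟩
end
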